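/- arXiv:2604.25739 — 3 statements merged into one kernel-verified Lean document; each statement's English description precedes it below -/
import Mathlib

section
/- Let D ≥ 4 be an even integer and λ = D/2 − 1. Let Ḡ be a finite graph with vertex set V̄ = V_int ⊔ {v₀, v₁, v_z, v_∞} and real edge weights ν : E(Ḡ) → ℝ satisfying the completion conditions: Σ_{e ∋ v} ν_e = D/λ for every v ∈ V_int, and Σ_{e ∋ v} ν_e = 0 for each v ∈ {v₀, v₁, v_z, v_∞}. Fix x_{v₀} = 0, x_{v₁} = e ∈ ℝ^D with ‖e‖ = 1, and x_{v_z} = y ∈ ℝ^D such that 0, e, y are pairwise distinct and not collinear. For V ⊆ V̄ set N_{Ḡ[V]} = Σ_{{u,w} ∈ E(Ḡ), u ∈ V, w ∈ V} ν_{uw} − ((λ+1)/λ)·|V ∩ V_int|. Then the function (x_v)_{v ∈ V_int} ↦ ∏_{{u,w} ∈ E(Ḡ), v_∞ ∉ {u,w}} ‖x_u − x_w‖^{−2λν_{uw}} is Lebesgue integrable on (ℝ^D)^{V_int} if and only if for every subset V ⊆ V̄ with |V| ≥ 2 and |V ∩ {v₀, v₁, v_z, v_∞}| ≤ 1 it holds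 that N_{Ḡ[V]} < (|V ∩ {v₀, v₁, v_z, v_∞}| − 1)·(λ+1)/λ. -/
open MeasureTheory

namespace CGF
set_option linter.unusedSectionVars false
open scoped ENNReal

noncomputable def Lm {V : Type} [DecidableEq V] (d : V → V → ℝ) (m : ℝ) (p q : V) : ℝ :=
  if p = q then Real.log m else Real.log (d p q)

noncomputable def Phi {V : Type} [Fintype V] [DecidableEq V] (b d : V → V → ℝ) (δ : ℝ)
    (π : V → V) (N m : ℝ) : ℝ :=
  δ * N * Real.log m - ∑ x, ∑ y, b x y * Lm d m (π x) (π y)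

noncomputable def HE {V : Type} [DecidableEq V] (Ext : Finset V) (k : V → V → ℝ≥0∞) :
    ℕ → Finset V → ℝ≥0∞
  | 0, _ => 1
  | n + 1, s => ∑ w ∈ s, ∑ u ∈ (s ∪ Ext).erase w, k u w * HE Ext k n (s.erase w)

lemma coef_nonneg {V : Type} [Fintype V] [DecidableEq V] (b : V → V → ℝ) (δ : ℝ)
    (Ext : Finset V)
    (hb : ∀ W : Finset V, W.Nonempty → (W ∩ Ext).card ≤ 1 →
      ∑ x ∈ W, ∑ y ∈ W, b x y ≤ δ * ((W.card : ℝ) - 1))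
    (T : Finset V) (hT : Ext ⊆ T) (π : V → V) (h1 : ∀ v, π v ∈ T) (h2 : ∀ v ∈ T, π v = v) :
    ∑ x, ∑ y, (if π x = π y then b x y else 0) ≤ δ * ((Fintype.card V : ℝ) - T.card) := by
  have e1 : ∑ x, ∑ y, (if π x = π y then b x y else 0)
      = ∑ v ∈ T, ∑ x ∈ Finset.univ.filter (fun x => π x = v),
          ∑ y ∈ Finset.univ.filter (fun x => π x = v), b x y := by
    rw [← Finset.sum_fiberwise_of_maps_to (s := Finset.univ) (t := T) (g := π) (fun v _ => h1 v)]
    refine Finset.sum_congr rfl fun v _ => Finset.sum_congr rfl fun x hx => ?_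
    rw [Finset.sum_filter]
    refine Finset.sum_congr rfl fun y _ => ?_
    simp only [Finset.mem_filter, Finset.mem_univ, true_and] at hx
    rw [hx]
    simp only [eq_comm]
  have e2 : (Fintype.card V : ℝ)
      = ∑ v ∈ T, ((Finset.univ.filter (fun x => π x = v)).card : ℝ) := by
    have := Finset.card_eq_sum_card_fiberwise (s := Finset.univ) (t := T) (f := π)
      (fun v _ => h1 v)
    rw [Finset.card_univ] at this
    exact_mod_cast this
  rw [e1, e2]
  have : δ * (∑ v ∈ T, ((Finset.univ.filter (fun x => π x = v)).card : ℝ) - T.card)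
      = ∑ v ∈ T, δ * (((Finset.univ.filter (fun x => π x = v)).card : ℝ) - 1) := by
    rw [← Finset.mul_sum, Finset.sum_sub_distrib]; simp
  rw [this]
  refine Finset.sum_le_sum fun v hv => hb _ ⟨v, by simp [h2 v hv]⟩ ?_
  rw [Finset.card_le_one]
  intro a ha c hc
  simp only [Finset.mem_inter, Finset.mem_filter, Finset.mem_univ, true_and] at ha hc
  rw [← h2 a (hT ha.2), ← h2 c (hT hc.2), ha.1, hc.1]

lemma Phi_eq {V : Type} [Fintype V] [DecidableEq V] (b d : V → V → ℝ) (δ : ℝ)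
    (π : V → V) (N m : ℝ) :
    Phi b d δ π N m = (δ * N - ∑ x, ∑ y, (if π x = π y then b x y else 0)) * Real.log m
      - ∑ x, ∑ y, (if π x = π y then 0 else b x y * Real.log (d (π x) (π y))) := by
  unfold Phi Lm
  rw [sub_mul, sub_sub, Finset.sum_mul, ← Finset.sum_add_distrib]
  congr 1
  refine Finset.sum_congr rfl fun x _ => ?_
  rw [Finset.sum_mul, ← Finset.sum_add_distrib]
  refine Finset.sum_congr rfl fun y _ => ?_
  split_ifs <;> ring

lemma log_diff {a c K : ℝ} (ha : 0 < a) (hc : 0 < c) (hK : 0 < K) (h1 : a ≤ K * c)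
    (h2 : c ≤ K * a) : |Real.log a - Real.log c| ≤ Real.log K := by
  rw [abs_le]
  have e1 := Real.log_le_log ha h1
  have e2 := Real.log_le_log hc h2
  rw [Real.log_mul hK.ne' hc.ne'] at e1
  rw [Real.log_mul hK.ne' ha.ne'] at e2
  constructor <;> linarith

lemma sum_bound {V : Type} [Fintype V] (b : V → V → ℝ) (f g : V → V → ℝ) (κ : ℝ)
    (h : ∀ x y, |f x y - g x y| ≤ κ) :
    - ∑ x, ∑ y, b x y * f x y ≤ (∑ x, ∑ y, |b x y|) * κ - ∑ x, ∑ y, b x y * g x y := by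
  rw [Finset.sum_mul, neg_le_iff_add_nonneg', sub_eq_add_neg, ← add_assoc,
    ← sub_eq_add_neg, ← Finset.sum_add_distrib, ← Finset.sum_sub_distrib]
  refine Finset.sum_nonneg fun x _ => ?_
  rw [Finset.sum_mul, ← Finset.sum_add_distrib, ← Finset.sum_sub_distrib]
  refine Finset.sum_nonneg fun y _ => ?_
  have h1 := h x y
  have h2 : |b x y * (f x y - g x y)| ≤ |b x y| * κ := by
    rw [abs_mul]; exact mul_le_mul_of_nonneg_left h1 (abs_nonneg _)
  have := (abs_le.mp h2).1
  linarith [mul_sub (b x y) (f x y) (g x y)]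

lemma pw {V : Type} [Fintype V] [DecidableEq V] (b d : V → V → ℝ) (δ K : ℝ)
    (hK : 2 ≤ K) (Ext : Finset V) (hExt : Ext.Nonempty)
    (hb : ∀ W : Finset V, W.Nonempty → (W ∩ Ext).card ≤ 1 →
      ∑ x ∈ W, ∑ y ∈ W, b x y ≤ δ * ((W.card : ℝ) - 1))
    (dsym : ∀ x y, d x y = d y x) (dtri : ∀ x y z, d x z ≤ d x y + d y z)
    (dpos : ∀ x y, x ≠ y → 0 < d x y) (dle : ∀ x y, d x y ≤ 1)
    (dext : ∀ x ∈ Ext, ∀ y ∈ Ext, x ≠ y → 1 ≤ (K - 1) * d x y)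
    (k : V → V → ℝ≥0∞) (ρ : V → ℝ≥0∞)
    (hk : ∀ u w, w ∉ Ext → u ≠ w → ENNReal.ofReal (Real.exp (-(δ * Real.log (d u w)))) * ρ w ≤ k u w) :
    ∀ (n : ℕ) (s : Finset V) (π : V → V) (m : ℝ), s.card = n → Disjoint s Ext →
      (∀ v, π v ∈ s ∪ Ext) → (∀ v ∈ s ∪ Ext, π v = v) → 0 < m → m ≤ 1 →
      (∀ x ∈ s, ∀ y ∈ s ∪ Ext, x ≠ y → m ≤ d x y) →
      ENNReal.ofReal (Real.exp (Phi b d δ π ((Fintype.card V : ℝ) - (s ∪ Ext).card) m))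
          * ∏ v ∈ s, ρ v
        ≤ ENNReal.ofReal (Real.exp ((∑ x, ∑ y, |b x y|) * Real.log K * (n + 1)))
          * HE Ext k n s := by
  intro n
  induction n with
  | zero =>
    intro s π m hs _ h1 h2 hm0 hm1 _
    rw [Finset.card_eq_zero] at hs
    subst hs
    simp only [HE, Finset.prod_empty, mul_one, Nat.cast_zero, zero_add]
    apply ENNReal.ofReal_le_ofReal
    apply Real.exp_le_exp.mpr
    rw [Phi_eq]
    have hc := coef_nonneg b δ Ext hb (∅ ∪ Ext) (by simp) π h1 h2
    have hl := Real.log_nonpos hm0.le hm1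
    have h3 := sum_bound b (fun x y => if π x = π y then 0 else Real.log (d (π x) (π y)))
      (fun _ _ => 0) (Real.log K) (by
        intro x y
        simp only [sub_zero]
        split_ifs with h
        · simpa using Real.log_nonneg (by linarith)
        · have hd := dpos _ _ h
          have hx := h1 x
          have hy := h1 y
          simp only [Finset.empty_union] at hx hy
          have := log_diff (K := K) hd one_pos (by linarith) (by linarith [dle (π x) (π y)])
            (by linarith [dext _ hx _ hy h])
          simpa using this)
    simp only [mul_ite, mul_zero, Finset.sum_const_zero, sub_zero] at h3
    have := mul_nonpos_of_nonneg_of_nonpos (sub_nonneg.mpr hc) hl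
    linarith
  | succ n ih =>
    intro s π m hs hdis h1 h2 hm0 hm1 hmd
    -- closest pair
    obtain ⟨w, u, hw, hu, huw, hmin⟩ : ∃ w u, w ∈ s ∧ u ∈ s ∪ Ext ∧ w ≠ u ∧
        ∀ x ∈ s, ∀ y ∈ s ∪ Ext, x ≠ y → d w u ≤ d x y := by
      have hne : ((s ×ˢ (s ∪ Ext)).filter (fun p => p.1 ≠ p.2)).Nonempty := by
        obtain ⟨a, ha⟩ := Finset.card_pos.mp (by omega : 0 < s.card)
        obtain ⟨c, hc⟩ := hExt
        refine ⟨(a, c), ?_⟩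
        simp only [Finset.mem_filter, Finset.mem_product, Finset.mem_union]
        exact ⟨⟨ha, Or.inr hc⟩, fun h => Finset.disjoint_left.mp hdis ha (h ▸ hc)⟩
      obtain ⟨p, hp, hpm⟩ := Finset.exists_min_image _ (fun p : V × V => d p.1 p.2) hne
      simp only [Finset.mem_filter, Finset.mem_product] at hp
      refine ⟨p.1, p.2, hp.1.1, hp.1.2, hp.2, fun x hx y hy hxy => hpm (x, y) ?_⟩
      simp only [Finset.mem_filter, Finset.mem_product]
      exact ⟨⟨hx, hy⟩, hxy⟩
    set r := d w u with hr
    have hr0 : 0 < r := dpos _ _ huw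
    have hr1 : r ≤ 1 := dle _ _
    have hmr : m ≤ r := hmd w hw u hu huw
    have hwE : w ∉ Ext := Finset.disjoint_left.mp hdis hw
    set τ : V → V := fun v => if v = w then u else v with hτ
    have hTe : s.erase w ∪ Ext = (s ∪ Ext).erase w := by
      ext v; simp only [Finset.mem_union, Finset.mem_erase]
      constructor
      · rintro (h | h)
        · exact ⟨h.1, Or.inl h.2⟩
        · exact ⟨fun hh => hwE (hh ▸ h), Or.inr h⟩
      · rintro ⟨h, h' | h'⟩
        · exact Or.inl ⟨h, h'⟩
        · exact Or.inr h'
    have hcard : ((s.erase w ∪ Ext).card : ℝ) = (s ∪ Ext).card - 1 := by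
      rw [hTe, Finset.card_erase_of_mem (Finset.mem_union_left _ hw), Nat.cast_sub]
      · simp
      · exact Finset.card_pos.mpr ⟨w, Finset.mem_union_left _ hw⟩
    have IH := ih (s.erase w) (fun v => τ (π v)) r (by rw [Finset.card_erase_of_mem hw, hs]; rfl)
      (hdis.mono_left (Finset.erase_subset _ _))
      (by
        intro v
        rw [hTe, Finset.mem_erase]
        simp only [hτ]
        split_ifs with h
        · exact ⟨huw.symm, hu⟩
        · exact ⟨h, h1 v⟩)
      (by
        intro v hv
        rw [hTe, Finset.mem_erase] at hv
        simp only [hτ]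
        rw [h2 v hv.2, if_neg hv.1])
      hr0 hr1
      (by
        intro x hx y hy hxy
        rw [hTe] at hy
        exact hmin x (Finset.mem_of_mem_erase hx) y (Finset.mem_of_mem_erase hy) hxy)
    -- comparison of exponents
    have hΦ1 : Phi b d δ π ((Fintype.card V : ℝ) - (s ∪ Ext).card) m
        ≤ Phi b d δ π ((Fintype.card V : ℝ) - (s ∪ Ext).card) r := by
      rw [Phi_eq, Phi_eq]
      have hc := coef_nonneg b δ Ext hb (s ∪ Ext) Finset.subset_union_right π h1 h2
      have := mul_le_mul_of_nonneg_left (Real.log_le_log hm0 hmr) (sub_nonneg.mpr hc)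
      linarith
    have hdw : ∀ q ∈ s ∪ Ext, q ≠ w → q ≠ u →
        |Real.log (d w q) - Real.log (d u q)| ≤ Real.log K := by
      intro q hq hqw hqu
      have hp1 := dpos w q hqw.symm
      have hp2 := dpos u q hqu.symm
      apply log_diff hp1 hp2 (by linarith)
      · have t1 := dtri w u q
        have : r ≤ (K - 1) * d u q := by
          by_cases hqs : q ∈ s
          · have := hmin q hqs u hu hqu
            rw [dsym q u] at this
            nlinarith
          · by_cases hus : u ∈ s
            · have := hmin u hus q hq hqu.symm
              nlinarith
            · have hq' : q ∈ Ext := (Finset.mem_union.mp hq).resolve_left hqs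
              have hu' : u ∈ Ext := (Finset.mem_union.mp hu).resolve_left hus
              linarith [dext u hu' q hq' hqu.symm]
        linarith
      · have t1 := dtri u w q
        rw [dsym u w] at t1
        have := hmin w hw q hq hqw.symm
        nlinarith
    have hL : ∀ x y, |Lm d r (π x) (π y) - Lm d r (τ (π x)) (τ (π y))| ≤ Real.log K := by
      intro x y
      have hlogK : 0 ≤ Real.log K := Real.log_nonneg (by linarith)
      have hx := h1 x
      have hy := h1 y
      generalize π x = p at *
      generalize π y = q at *
      simp only [hτ, Lm]
      by_cases hpw : p = w
      · by_cases hqw : q = w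
        · simp [hpw, hqw, hlogK]
        · by_cases hqu : q = u
          · subst hqu; subst hpw
            simp [huw, huw.symm, hlogK, hr]
          · subst hpw
            have := hdw q hy hqw hqu
            rw [if_neg (Ne.symm hqw), if_pos rfl, if_neg hqw, if_neg (Ne.symm hqu)]
            exact this
      · by_cases hqw : q = w
        · by_cases hpu : p = u
          · subst hpu; subst hqw
            simp [huw.symm, hlogK, hr, dsym p q]
          · subst hqw
            have := hdw p hx hpw hpu
            rw [if_neg hpw, if_neg hpw, if_pos rfl, if_neg hpu, dsym p q, dsym p u]
            exact this
        · simp [hpw, hqw, hlogK]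
    have hΦ2 : Phi b d δ π ((Fintype.card V : ℝ) - (s ∪ Ext).card) r
        ≤ (∑ x, ∑ y, |b x y|) * Real.log K + -(δ * Real.log (d u w))
          + Phi b d δ (fun v => τ (π v)) ((Fintype.card V : ℝ) - (s.erase w ∪ Ext).card) r := by
      unfold Phi
      have := sum_bound b (fun x y => Lm d r (π x) (π y))
        (fun x y => Lm d r (τ (π x)) (τ (π y))) _ hL
      rw [hcard, dsym u w, ← hr]
      simp only at this ⊢
      linarith
    have hexp : Real.exp (Phi b d δ π ((Fintype.card V : ℝ) - (s ∪ Ext).card) m)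
        ≤ Real.exp ((∑ x, ∑ y, |b x y|) * Real.log K) * Real.exp (-(δ * Real.log (d u w))) *
          Real.exp (Phi b d δ (fun v => τ (π v))
            ((Fintype.card V : ℝ) - (s.erase w ∪ Ext).card) r) := by
      rw [← Real.exp_add, ← Real.exp_add]
      exact Real.exp_le_exp.mpr (hΦ1.trans hΦ2)
    set Q := (∑ x, ∑ y, |b x y|) * Real.log K with hQ
    have hterm : k u w * HE Ext k n (s.erase w) ≤ HE Ext k (n + 1) s := by
      rw [HE]
      refine le_trans ?_ (Finset.single_le_sum (f := fun w => ∑ u ∈ (s ∪ Ext).erase w,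
        k u w * HE Ext k n (s.erase w)) (fun _ _ => zero_le) hw)
      exact Finset.single_le_sum (f := fun u => k u w * HE Ext k n (s.erase w))
        (fun _ _ => zero_le) (Finset.mem_erase.mpr ⟨huw.symm, hu⟩)
    calc _ ≤ ENNReal.ofReal (Real.exp Q * Real.exp (-(δ * Real.log (d u w))) *
          Real.exp (Phi b d δ (fun v => τ (π v))
            ((Fintype.card V : ℝ) - (s.erase w ∪ Ext).card) r)) * (ρ w * ∏ v ∈ s.erase w, ρ v) := by
          rw [Finset.mul_prod_erase _ _ hw]
          gcongr
      _ = ENNReal.ofReal (Real.exp Q) *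
            ((ENNReal.ofReal (Real.exp (-(δ * Real.log (d u w)))) * ρ w) *
          (ENNReal.ofReal (Real.exp (Phi b d δ (fun v => τ (π v))
            ((Fintype.card V : ℝ) - (s.erase w ∪ Ext).card) r)) * ∏ v ∈ s.erase w, ρ v)) := by
          rw [ENNReal.ofReal_mul (by positivity), ENNReal.ofReal_mul (by positivity)]
          ring
      _ ≤ ENNReal.ofReal (Real.exp Q) * (k u w * (ENNReal.ofReal (Real.exp (Q * (n + 1)))
            * HE Ext k n (s.erase w))) := by
          gcongr
          exact hk u w hwE huw.symm
      _ = ENNReal.ofReal (Real.exp (Q * ((n + 1 : ℕ) + 1))) * (k u w * HE Ext k n (s.erase w)) := by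
          have : Q * (((n + 1 : ℕ) : ℝ) + 1) = Q + Q * (n + 1) := by push_cast; ring
          rw [this, Real.exp_add, ENNReal.ofReal_mul (by positivity)]
          ring
      _ ≤ _ := by gcongr

lemma HE_ne_zero {V : Type} [DecidableEq V] (Ext : Finset V) (hExt : Ext.Nonempty)
    (k : V → V → ℝ≥0∞) (hk : ∀ u w, k u w ≠ 0) :
    ∀ (n : ℕ) (s : Finset V), s.card = n → Disjoint s Ext → HE Ext k n s ≠ 0 := by
  intro n
  induction n with
  | zero => intro s _ _; simp [HE]
  | succ n ih =>
    intro s hs hd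
    obtain ⟨w, hw⟩ := Finset.card_pos.mp (by omega : 0 < s.card)
    obtain ⟨c, hc⟩ := hExt
    have hcw : c ≠ w := fun h => Finset.disjoint_left.mp hd hw (h ▸ hc)
    rw [HE]
    intro h0
    rw [Finset.sum_eq_zero_iff] at h0
    have h1 := h0 w hw
    rw [Finset.sum_eq_zero_iff] at h1
    have h2 := h1 c (by simp [hcw, hc])
    rw [mul_eq_zero] at h2
    rcases h2 with h2 | h2
    · exact hk _ _ h2
    · exact ih _ (by rw [Finset.card_erase_of_mem hw, hs]; rfl)
        (hd.mono_left (Finset.erase_subset _ _)) h2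

lemma HE_eq_top {V : Type} [DecidableEq V] (Ext : Finset V) (hExt : Ext.Nonempty)
    (k : V → V → ℝ≥0∞) (hk : ∀ u w, k u w ≠ 0) (n : ℕ) (s : Finset V)
    (hs : s.card = n) (hd : Disjoint s Ext) (u w : V) (hw : w ∈ s) (hu : u ∈ s ∪ Ext)
    (huw : u ≠ w) (hT : k u w = ⊤) : HE Ext k n s = ⊤ := by
  cases n with
  | zero => simp at hs; simp [hs] at hw
  | succ n =>
    have hne := HE_ne_zero Ext hExt k hk n (s.erase w)
      (by rw [Finset.card_erase_of_mem hw, hs]; rfl) (hd.mono_left (Finset.erase_subset _ _))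
    rw [HE, ENNReal.sum_eq_top]
    refine ⟨w, hw, ?_⟩
    rw [ENNReal.sum_eq_top]
    exact ⟨u, Finset.mem_erase.mpr ⟨huw, hu⟩, by rw [hT, ENNReal.top_mul hne]⟩


set_option linter.unusedSectionVars false
section chordal
variable {E : Type} [NormedAddCommGroup E] [InnerProductSpace ℝ E]

noncomputable def jb (x : E) : ℝ := √(1 + ‖x‖ ^ 2)

lemma jb_pos (x : E) : 0 < jb x := by unfold jb; positivity

lemma one_le_jb (x : E) : 1 ≤ jb x := by
  unfold jb; rw [Real.one_le_sqrt]; nlinarith [sq_nonneg ‖x‖]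

lemma jb_sq (x : E) : jb x ^ 2 = 1 + ‖x‖ ^ 2 := by
  unfold jb; rw [Real.sq_sqrt (by positivity)]

lemma norm_le_jb (x : E) : ‖x‖ ≤ jb x := by
  have := jb_sq x
  nlinarith [jb_pos x, norm_nonneg x]

noncomputable def ch : Option E → Option E → ℝ
  | none, none => 0
  | none, some y => (jb y)⁻¹
  | some x, none => (jb x)⁻¹
  | some x, some y => ‖x - y‖ / (jb x * jb y)

noncomputable def lft (x : E) : WithLp 2 (E × ℝ) := WithLp.toLp 2 (x, 1)

lemma norm_lft (x : E) : ‖lft x‖ = jb x := by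
  rw [WithLp.prod_norm_eq_of_L2]
  simp [lft, jb, add_comm]

lemma dist_lft (x y : E) : dist (lft x) (lft y) = ‖x - y‖ := by
  rw [dist_eq_norm, WithLp.prod_norm_eq_of_L2]
  simp [lft]

noncomputable def psi : Option E → WithLp 2 (E × ℝ)
  | none => 0
  | some x => (1 / ‖lft x‖) ^ 2 • lft x

lemma lft_ne (x : E) : lft x ≠ 0 := by
  rw [← norm_ne_zero_iff, norm_lft]; exact (jb_pos x).ne'

lemma norm_psi (x : E) : ‖psi (some x)‖ = (jb x)⁻¹ := by
  have := jb_pos x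
  simp only [psi]
  rw [norm_smul, norm_lft, Real.norm_of_nonneg (by positivity)]
  field_simp

lemma ch_eq (p q : Option E) : ch p q = dist (psi p) (psi q) := by
  match p, q with
  | none, none => simp [ch]
  | none, some y => rw [dist_comm, dist_eq_norm]; simp only [ch]; rw [← norm_psi]; simp [psi]
  | some x, none => rw [dist_eq_norm]; simp only [ch]; rw [← norm_psi]; simp [psi]
  | some x, some y =>
    simp only [ch, psi]
    rw [dist_div_norm_sq_smul (lft_ne x) (lft_ne y), norm_lft, norm_lft, dist_lft]
    ring

lemma ch_symm (p q : Option E) : ch p q = ch q p := by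
  rw [ch_eq, ch_eq, dist_comm]

lemma ch_tri (p q r : Option E) : ch p r ≤ ch p q + ch q r := by
  rw [ch_eq, ch_eq, ch_eq]; exact dist_triangle _ _ _

lemma ch_nonneg (p q : Option E) : 0 ≤ ch p q := by rw [ch_eq]; exact dist_nonneg

lemma ch_self (p : Option E) : ch p p = 0 := by rw [ch_eq]; exact dist_self _

lemma ch_pos (p q : Option E) (h : p ≠ q) : 0 < ch p q := by
  match p, q with
  | none, none => exact absurd rfl h
  | none, some y => simp only [ch]; exact inv_pos.mpr (jb_pos y)
  | some x, none => simp only [ch]; exact inv_pos.mpr (jb_pos x)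
  | some x, some y =>
    have : x ≠ y := fun h' => h (by rw [h'])
    have h1 := jb_pos x
    have h2 := jb_pos y
    have h3 : 0 < ‖x - y‖ := norm_pos_iff.mpr (sub_ne_zero.mpr this)
    simp only [ch]; positivity

lemma ch_le (p q : Option E) : ch p q ≤ 1 := by
  match p, q with
  | none, none => simp [ch]
  | none, some y => simp only [ch]; exact inv_le_one_of_one_le₀ (one_le_jb y)
  | some x, none => simp only [ch]; exact inv_le_one_of_one_le₀ (one_le_jb x)
  | some x, some y =>
    simp only [ch]
    have h1 := jb_pos x
    have h2 := jb_pos y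
    rw [div_le_one (by positivity)]
    refine (norm_sub_le x y).trans ?_
    apply le_of_sq_le_sq _ (by positivity)
    rw [mul_pow, jb_sq, jb_sq]
    nlinarith [sq_nonneg (‖x‖ * ‖y‖ - 1)]

lemma jb_le (x y : E) : jb x ≤ jb y + ‖x - y‖ := by
  rw [← norm_lft, ← norm_lft, ← dist_lft, dist_eq_norm]
  have := norm_sub_norm_le (lft x) (lft y)
  linarith

lemma jb_rpow_le (y : E) (α : ℝ) (hα : 0 < α) :
    jb y ^ (-α) ≤ 2 ^ α * (1 + ‖y‖) ^ (-α) := by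
  have h1 := jb_pos y
  have h0 : 1 + ‖y‖ ≤ 2 * jb y := by linarith [one_le_jb y, norm_le_jb y]
  have hp : 0 < 1 + ‖y‖ := by positivity
  have : (2 * jb y) ^ (-α) ≤ (1 + ‖y‖) ^ (-α) :=
    Real.rpow_le_rpow_of_nonpos hp h0 (by linarith)
  rw [Real.mul_rpow (by norm_num) h1.le, Real.rpow_neg (by norm_num)] at this
  have h2 : (0 : ℝ) < 2 ^ α := by positivity
  calc jb y ^ (-α) = 2 ^ α * (((2 : ℝ) ^ α)⁻¹ * jb y ^ (-α)) := by field_simp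
    _ ≤ _ := by gcongr

/-- the pointwise kernel bound -/
lemma ker_bound (D δ : ℝ) (hδ : 0 < δ) (hD : δ < D) (x y : E) (hxy : x ≠ y) :
    (ch (some x) (some y)) ^ (-δ) * jb y ^ (-(2 * D)) ≤
      2 ^ δ * 2 ^ (2 * D - δ) * ((Metric.ball (0 : E) 1).indicator (fun z => ‖z‖ ^ (-δ)) (y - x)
        + (1 + ‖y - x‖) ^ (-(2 * D - δ)) + (1 + ‖y‖) ^ (-(2 * D - δ))) := by
  have hx := jb_pos x
  have hy := jb_pos y
  have hy1 := one_le_jb y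
  have hz : 0 < ‖y - x‖ := norm_pos_iff.mpr (sub_ne_zero.mpr hxy.symm)
  have hle := jb_le x y
  simp only [ch]
  rw [norm_sub_rev x y] at *
  set z := ‖y - x‖ with hzdef
  have hα : 0 < 2 * D - δ := by linarith
  have e1 : (z / (jb x * jb y)) ^ (-δ) * jb y ^ (-(2 * D))
      = z ^ (-δ) * jb x ^ δ * jb y ^ (-(2 * D - δ)) := by
    rw [Real.div_rpow hz.le (by positivity), Real.mul_rpow hx.le hy.le, Real.rpow_neg hx.le,
      Real.rpow_neg hy.le, show -(2 * D - δ) = δ + -(2 * D) by ring, Real.rpow_add hy]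
    field_simp
  rw [e1]
  have hA : (0 : ℝ) < 2 ^ δ := by positivity
  have hB : (1 : ℝ) ≤ 2 ^ (2 * D - δ) := Real.one_le_rpow (by norm_num) hα.le
  have hi : 0 ≤ (Metric.ball (0 : E) 1).indicator (fun z => ‖z‖ ^ (-δ)) (y - x) :=
    Set.indicator_nonneg (fun _ _ => by positivity) _
  have hj : 0 ≤ (1 + z) ^ (-(2 * D - δ)) := by positivity
  have hk : 0 ≤ (1 + ‖y‖) ^ (-(2 * D - δ)) := by positivity
  by_cases hc : z ≤ jb y
  · have h1 : jb x ^ δ ≤ 2 ^ δ * jb y ^ δ := by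
      rw [← Real.mul_rpow (by norm_num) hy.le]
      exact Real.rpow_le_rpow hx.le (by linarith) hδ.le
    have h2 : z ^ (-δ) * jb x ^ δ * jb y ^ (-(2 * D - δ))
        ≤ 2 ^ δ * (z ^ (-δ) * jb y ^ (-(2 * (D - δ)))) := by
      calc _ ≤ z ^ (-δ) * (2 ^ δ * jb y ^ δ) * jb y ^ (-(2 * D - δ)) := by gcongr
        _ = 2 ^ δ * (z ^ (-δ) * (jb y ^ δ * jb y ^ (-(2 * D - δ)))) := by ring
        _ = _ := by rw [← Real.rpow_add hy]; ring_nf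
    refine h2.trans ?_
    rw [mul_assoc]
    refine mul_le_mul_of_nonneg_left ?_ hA.le
    by_cases hz1 : z < 1
    · have : (Metric.ball (0 : E) 1).indicator (fun z => ‖z‖ ^ (-δ)) (y - x) = z ^ (-δ) := by
        rw [Set.indicator_of_mem (by simpa using hz1)]
      rw [this] at hi ⊢
      have h3 : jb y ^ (-(2 * (D - δ))) ≤ 1 :=
        Real.rpow_le_one_of_one_le_of_nonpos hy1 (by linarith)
      calc z ^ (-δ) * jb y ^ (-(2 * (D - δ))) ≤ 1 * (z ^ (-δ)) := by
            rw [one_mul]; exact mul_le_of_le_one_right hi h3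
        _ ≤ 2 ^ (2 * D - δ) * (z ^ (-δ) + (1 + z) ^ (-(2 * D - δ))
            + (1 + ‖y‖) ^ (-(2 * D - δ))) := by gcongr; linarith
    · push Not at hz1
      have h3 : jb y ^ (-(2 * (D - δ))) ≤ z ^ (-(2 * (D - δ))) :=
        Real.rpow_le_rpow_of_nonpos hz hc (by linarith)
      have h4 : (2 * z) ^ (-(2 * D - δ)) ≤ (1 + z) ^ (-(2 * D - δ)) :=
        Real.rpow_le_rpow_of_nonpos (by linarith) (by linarith) (by linarith)
      rw [Real.mul_rpow (by norm_num) hz.le, Real.rpow_neg (by norm_num)] at h4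
      calc z ^ (-δ) * jb y ^ (-(2 * (D - δ))) ≤ z ^ (-δ) * z ^ (-(2 * (D - δ))) := by gcongr
        _ = z ^ (-(2 * D - δ)) := by rw [← Real.rpow_add hz]; ring_nf
        _ = 2 ^ (2 * D - δ) * (((2 : ℝ) ^ (2 * D - δ))⁻¹ * z ^ (-(2 * D - δ))) := by
            field_simp
        _ ≤ 2 ^ (2 * D - δ) * (1 + z) ^ (-(2 * D - δ)) := by gcongr
        _ ≤ _ := by gcongr; linarith
  · push Not at hc
    have h1 : jb x ^ δ ≤ 2 ^ δ * z ^ δ := by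
      rw [← Real.mul_rpow (by norm_num) hz.le]
      exact Real.rpow_le_rpow hx.le (by linarith) hδ.le
    calc _ ≤ z ^ (-δ) * (2 ^ δ * z ^ δ) * jb y ^ (-(2 * D - δ)) := by gcongr
      _ = 2 ^ δ * jb y ^ (-(2 * D - δ)) := by
          rw [Real.rpow_neg hz.le]; field_simp
      _ ≤ 2 ^ δ * (2 ^ (2 * D - δ) * (1 + ‖y‖) ^ (-(2 * D - δ))) := by
          gcongr; exact jb_rpow_le y _ hα
      _ ≤ _ := by rw [mul_assoc]; gcongr; linarith

variable [FiniteDimensional ℝ E] [MeasurableSpace E] [BorelSpace E]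

noncomputable def kerE (D δ : ℝ) (p : Option E) (y : E) : ℝ≥0∞ :=
  ENNReal.ofReal (ch p (some y)) ^ (-δ) * ENNReal.ofReal (jb y ^ (-(2 * D)))

lemma ker_int (D δ : ℝ) (hDdef : (Module.finrank ℝ E : ℝ) = D) (hδ : 0 < δ) (hD : δ < D) :
    ∃ M : ℝ≥0∞, M ≠ ⊤ ∧ ∀ p : Option E,
      ∫⁻ y : E, kerE D δ p y ≤ M := by
  have hdim : 1 ≤ Module.finrank ℝ E := by
    have : (0 : ℝ) < Module.finrank ℝ E := by linarith
    exact_mod_cast this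
  have : Nontrivial E := Module.nontrivial_of_finrank_pos (R := ℝ) (by omega)
  set g1 : E → ℝ≥0∞ := fun z =>
    ENNReal.ofReal ((Metric.ball (0 : E) 1).indicator (fun z => ‖z‖ ^ (-δ)) z) with hg1
  set g2 : E → ℝ≥0∞ := fun z => ENNReal.ofReal ((1 + ‖z‖) ^ (-(2 * D - δ))) with hg2
  have mg1 : Measurable g1 := by
    apply ENNReal.measurable_ofReal.comp
    exact (Measurable.indicator (by fun_prop) measurableSet_ball)
  have mg2 : Measurable g2 := by fun_prop
  have i1 : ∫⁻ z, g1 z ≠ ⊤ := by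
    have h : IntegrableOn (fun z : E => ‖z‖ ^ (-δ)) (Metric.ball 0 1) volume :=
      integrableOn_ball_of_norm_le_rpow hdim (C := 1) (by rw [hDdef]; exact hD)
        (Filter.Eventually.of_forall fun x => by
          rw [Real.norm_of_nonneg (by positivity), one_mul])
        (Measurable.aestronglyMeasurable (by fun_prop))
    rw [← integrable_indicator_iff measurableSet_ball] at h
    exact ((hasFiniteIntegral_iff_ofReal (Filter.Eventually.of_forall fun z =>
      Set.indicator_nonneg (fun _ _ => by positivity) z)).mp h.2).ne
  have i2 : ∫⁻ z, g2 z ≠ ⊤ :=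
    ((hasFiniteIntegral_iff_ofReal (Filter.Eventually.of_forall fun z => by positivity)).mp
    (integrable_one_add_norm (E := E) (μ := volume) (r := 2 * D - δ)
      (by rw [hDdef]; linarith)).2).ne
  set C : ℝ := 2 ^ δ * 2 ^ (2 * D - δ) with hC
  have hC0 : 0 ≤ C := by positivity
  refine ⟨ENNReal.ofReal C * ((∫⁻ z, g1 z) + (∫⁻ z, g2 z) + ∫⁻ z, g2 z), ?_, ?_⟩
  · exact ENNReal.mul_ne_top ENNReal.ofReal_ne_top
      (ENNReal.add_ne_top.mpr ⟨ENNReal.add_ne_top.mpr ⟨i1, i2⟩, i2⟩)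
  · intro p
    have hb : ∀ᵐ y : E, kerE D δ p y ≤
        ENNReal.ofReal C * (g1 (y - p.getD 0) + g2 (y - p.getD 0) + g2 y) := by
      cases p with
      | none =>
        refine Filter.Eventually.of_forall fun y => ?_
        have hy := jb_pos y
        simp only [kerE, ch]
        rw [ENNReal.ofReal_rpow_of_pos (by positivity), ← ENNReal.ofReal_mul (by positivity),
          Real.inv_rpow hy.le, Real.rpow_neg hy.le, inv_inv, ← Real.rpow_add hy,
          show δ + -(2 * D) = -(2 * D - δ) by ring]
        calc _ ≤ ENNReal.ofReal (C * (1 + ‖y‖) ^ (-(2 * D - δ))) := by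
              apply ENNReal.ofReal_le_ofReal
              refine (jb_rpow_le y _ (by linarith)).trans ?_
              rw [hC]
              gcongr
              have : (1 : ℝ) ≤ 2 ^ δ := Real.one_le_rpow (by norm_num) hδ.le
              nlinarith [show (0 : ℝ) < 2 ^ (2 * D - δ) by positivity]
          _ = ENNReal.ofReal C * g2 y := by rw [ENNReal.ofReal_mul hC0]
          _ ≤ _ := by gcongr; exact le_add_self
      | some x =>
        have : ∀ᵐ y : E, y ≠ x := by
          rw [ae_iff]; simp
        filter_upwards [this] with y hyx
        have hp := ch_pos (some x) (some y) (by simpa using hyx.symm)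
        simp only [kerE, Option.getD_some]
        rw [ENNReal.ofReal_rpow_of_pos hp, ← ENNReal.ofReal_mul (by positivity)]
        refine (ENNReal.ofReal_le_ofReal (ker_bound D δ hδ hD x y hyx.symm)).trans ?_
        rw [ENNReal.ofReal_mul hC0]
        gcongr
        refine ENNReal.ofReal_add_le.trans ?_
        gcongr
        exact ENNReal.ofReal_add_le
    refine (lintegral_mono_ae hb).trans ?_
    rw [lintegral_const_mul _ (by fun_prop), lintegral_add_left (by fun_prop),
      lintegral_add_left (by fun_prop), lintegral_sub_right_eq_self g1,
      lintegral_sub_right_eq_self g2]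

end chordal

section treeint
variable {E : Type} [NormedAddCommGroup E] [InnerProductSpace ℝ E]
  [FiniteDimensional ℝ E] [MeasurableSpace E] [BorelSpace E]

noncomputable def po {V : Type} [DecidableEq V] (inf : V) (x : V → E) (u : V) : Option E :=
  if u = inf then none else some (x u)

noncomputable def kx {V : Type} [DecidableEq V] (D δ : ℝ) (inf : V) (x : V → E) (u w : V) :
    ℝ≥0∞ := kerE D δ (po inf x u) (x w)

lemma kx_meas {V : Type} [DecidableEq V] (D δ : ℝ) (inf : V) (u w : V) :
    Measurable (fun x : V → E => kx D δ inf x u w) := by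
  unfold kx kerE po
  by_cases h : u = inf
  · simp only [h, if_true, ch, jb]
    fun_prop
  · simp only [h, if_false, ch, jb]
    fun_prop

lemma HE_meas {V : Type} [DecidableEq V] (D δ : ℝ) (inf : V) (Ext : Finset V) :
    ∀ (n : ℕ) (s : Finset V), Measurable (fun x : V → E => HE Ext (kx D δ inf x) n s) := by
  intro n
  induction n with
  | zero => intro s; simp only [HE]; exact measurable_const
  | succ n ih =>
    intro s
    simp only [HE]
    refine Finset.measurable_fun_sum _ fun w _ => Finset.measurable_fun_sum _ fun u _ => ?_
    exact (kx_meas D δ inf u w).mul (ih _)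

lemma HE_update {V : Type} [DecidableEq V] (D δ : ℝ) (inf : V) (Ext : Finset V) (v : V)
    (hv : v ∉ Ext) (x : V → E) (z : E) :
    ∀ (n : ℕ) (s : Finset V), v ∉ s →
      HE Ext (kx D δ inf (Function.update x v z)) n s = HE Ext (kx D δ inf x) n s := by
  intro n
  induction n with
  | zero => intro s _; simp only [HE]
  | succ n ih =>
    intro s hs
    simp only [HE]
    refine Finset.sum_congr rfl fun w hw => Finset.sum_congr rfl fun u hu => ?_
    have hwv : w ≠ v := fun h => hs (h ▸ hw)
    have huv : u ≠ v := by
      rintro rfl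
      simp [hs, hv] at hu
    rw [ih _ (fun h => hs (Finset.mem_of_mem_erase h))]
    simp [kx, po, hwv, huv]

lemma HE_int {V : Type} [DecidableEq V] (D δ : ℝ) (inf : V) (Ext : Finset V)
    (hinf : inf ∈ Ext) (hDdef : (Module.finrank ℝ E : ℝ) = D) (hδ : 0 < δ) (hD : δ < D) :
    ∀ (n : ℕ) (s : Finset V), s.card = n → Disjoint s Ext →
      ∃ M : ℝ≥0∞, M ≠ ⊤ ∧ ∀ x : V → E,
        lmarginal (fun _ => volume) s (fun x : V → E => HE Ext (kx D δ inf x) n s) x ≤ M := by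
  obtain ⟨M0, hM0, hker⟩ := ker_int (E := E) D δ hDdef hδ hD
  intro n
  induction n with
  | zero =>
    intro s hs _
    rw [Finset.card_eq_zero] at hs
    subst hs
    exact ⟨1, by simp, fun x => by simp [HE]⟩
  | succ n ih =>
    intro s hs hd
    have key : ∀ w : s, ∃ M : ℝ≥0∞, M ≠ ⊤ ∧ ∀ x : V → E,
        lmarginal (fun _ => volume) (s.erase w)
          (fun x : V → E => HE Ext (kx D δ inf x) n (s.erase w)) x ≤ M := fun w =>
      ih _ (by rw [Finset.card_erase_of_mem w.2, hs]; rfl)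
        (hd.mono_left (Finset.erase_subset _ _))
    choose M hM hMx using key
    refine ⟨∑ w : s, ∑ u ∈ (s ∪ Ext).erase w.1, M0 * M w, ?_, ?_⟩
    · refine ENNReal.sum_ne_top.mpr fun w _ => ENNReal.sum_ne_top.mpr fun u _ => ?_
      exact ENNReal.mul_ne_top hM0 (hM w)
    · intro x
      have e1 : lmarginal (fun _ => volume) s
            (fun x : V → E => HE Ext (kx D δ inf x) (n + 1) s) x
          = ∑ w : s, ∑ u ∈ (s ∪ Ext).erase w.1, lmarginal (fun _ => volume) s
            (fun x : V → E => kx D δ inf x u w * HE Ext (kx D δ inf x) n (s.erase w)) x := by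
        simp only [HE, lmarginal]
        have hm : ∀ (u : V) (w : s), Measurable (fun y : (∀ _ : s, E) =>
            kx D δ inf (Function.updateFinset x s y) u w *
              HE Ext (kx D δ inf (Function.updateFinset x s y)) n (s.erase w)) := fun u w =>
          ((kx_meas D δ inf u w.1).mul (HE_meas D δ inf Ext n (s.erase w.1))).comp measurable_updateFinset
        simp_rw [← Finset.sum_coe_sort s]
        rw [lintegral_finsetSum _ fun w _ => Finset.measurable_fun_sum _ fun u _ => hm u w]
        refine Finset.sum_congr rfl fun w _ => ?_
        rw [lintegral_finsetSum _ fun u _ => hm u w]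
      rw [e1]
      refine Finset.sum_le_sum fun w _ => Finset.sum_le_sum fun u hu => ?_
      have hmul : Measurable (fun x : V → E =>
          kx D δ inf x u w * HE Ext (kx D δ inf x) n (s.erase w)) :=
        (kx_meas D δ inf u w.1).mul (HE_meas D δ inf Ext n (s.erase w.1))
      rw [lmarginal_erase' _ hmul w.2]
      have hwE : w.1 ∉ Ext := Finset.disjoint_left.mp hd w.2
      have huw : u ≠ w.1 := (Finset.mem_erase.mp hu).1
      have hwi : w.1 ≠ inf := fun h => hwE (h ▸ hinf)
      calc _ ≤ lmarginal (fun _ => volume) (s.erase w)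
            (fun x : V → E => M0 * HE Ext (kx D δ inf x) n (s.erase w)) x := by
            refine lmarginal_mono (fun x' => ?_) x
            simp only [HE_update D δ inf Ext w.1 hwE x' _ n _ (Finset.notMem_erase _ _)]
            rw [lintegral_mul_const]
            · gcongr
              refine le_trans (le_of_eq ?_) (hker (po inf x' u))
              refine lintegral_congr fun z => ?_
              simp [kx, po, huw]
            · exact (kx_meas D δ inf u w).comp (measurable_update x')
        _ = M0 * lmarginal (fun _ => volume) (s.erase w)
            (fun x : V → E => HE Ext (kx D δ inf x) n (s.erase w)) x := by
            simp only [lmarginal]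
            rw [lintegral_const_mul' _ _ hM0]
        _ ≤ _ := by gcongr; exact hMx w x
end treeint

section suff
variable {E : Type} [NormedAddCommGroup E] [InnerProductSpace ℝ E]
variable {V : Type} [Fintype V] [DecidableEq V]

noncomputable def fR (inf : V) (b : V → V → ℝ) (x : V → E) : ℝ :=
  ∏ u ∈ Finset.univ.erase inf, ∏ w ∈ Finset.univ.erase inf, ‖x u - x w‖ ^ (-b u w)

lemma fR_exp (inf : V) (b : V → V → ℝ) (hdiag : ∀ u, b u u = 0) (x : V → E)
    (hinj : ∀ u w, u ≠ inf → w ≠ inf → u ≠ w → x u ≠ x w) :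
    fR inf b x = Real.exp (- ∑ u ∈ Finset.univ.erase inf, ∑ w ∈ Finset.univ.erase inf,
      b u w * Real.log ‖x u - x w‖) := by
  unfold fR
  rw [← Finset.sum_neg_distrib, Real.exp_sum]
  refine Finset.prod_congr rfl fun u hu => ?_
  rw [← Finset.sum_neg_distrib, Real.exp_sum]
  refine Finset.prod_congr rfl fun w hw => ?_
  by_cases h : u = w
  · subst h; simp [hdiag]
  · have hp : 0 < ‖x u - x w‖ := norm_pos_iff.mpr (sub_ne_zero.mpr
      (hinj u w (Finset.ne_of_mem_erase hu) (Finset.ne_of_mem_erase hw) h))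
    rw [Real.rpow_def_of_pos hp]
    congr 1; ring

lemma log_identity (inf : V) (b L G : V → V → ℝ) (J : V → ℝ) (hsym : ∀ u w, b u w = b w u)
    (hdiag : ∀ u, b u u = 0)
    (hL : ∀ u w, u ≠ inf → w ≠ inf → u ≠ w → L u w = G u w - J u - J w)
    (hLi : ∀ u, u ≠ inf → L u inf = - J u) (hLs : ∀ u w, L u w = L w u) :
    ∑ u ∈ Finset.univ.erase inf, ∑ w ∈ Finset.univ.erase inf, b u w * G u w
      = ∑ u, ∑ w, b u w * L u w + 2 * ∑ u ∈ Finset.univ.erase inf, (J u * ∑ w, b u w) := by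
  set T := Finset.univ.erase inf with hT
  have hmem : inf ∈ (Finset.univ : Finset V) := Finset.mem_univ _
  have e0 : ∀ f : V → ℝ, ∑ u, f u = f inf + ∑ u ∈ T, f u := fun f =>
    (Finset.add_sum_erase _ _ hmem).symm
  have e1 : ∑ u, ∑ w, b u w * L u w
      = ∑ u ∈ T, ∑ w ∈ T, b u w * L u w + 2 * ∑ u ∈ T, (-(b u inf * J u)) := by
    rw [e0, e0, hdiag]
    have h1 : ∀ u ∈ T, ∑ w, b u w * L u w = -(b u inf * J u) + ∑ w ∈ T, b u w * L u w := by
      intro u hu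
      rw [e0, hLi u (Finset.ne_of_mem_erase hu)]; ring
    have h2 : ∑ w ∈ T, b inf w * L inf w = ∑ u ∈ T, (-(b u inf * J u)) := by
      refine Finset.sum_congr rfl fun w hw => ?_
      rw [hsym, hLs, hLi w (Finset.ne_of_mem_erase hw)]; ring
    rw [Finset.sum_congr rfl h1, Finset.sum_add_distrib, h2]; ring
  have e2 : ∑ u ∈ T, ∑ w ∈ T, b u w * G u w
      = ∑ u ∈ T, ∑ w ∈ T, (b u w * L u w + b u w * J u + b u w * J w) := by
    refine Finset.sum_congr rfl fun u hu => Finset.sum_congr rfl fun w hw => ?_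
    by_cases h : u = w
    · subst h; simp [hdiag]
    · rw [hL u w (Finset.ne_of_mem_erase hu) (Finset.ne_of_mem_erase hw) h]; ring
  have e3 : ∑ u ∈ T, ∑ w ∈ T, b u w * J w = ∑ u ∈ T, ∑ w ∈ T, b u w * J u := by
    rw [Finset.sum_comm]
    refine Finset.sum_congr rfl fun u _ => Finset.sum_congr rfl fun w _ => ?_
    rw [hsym]
  have e4 : ∑ u ∈ T, (J u * ∑ w, b u w)
      = ∑ u ∈ T, (b u inf * J u) + ∑ u ∈ T, ∑ w ∈ T, b u w * J u := by
    rw [← Finset.sum_add_distrib]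
    refine Finset.sum_congr rfl fun u _ => ?_
    rw [e0, ← Finset.sum_mul]; ring
  simp only [Finset.sum_add_distrib] at e2
  rw [e2, e1, e4, e3, Finset.sum_neg_distrib]; ring

lemma fR_ch (D : ℝ) (inf : V) (Ext : Finset V) (hinf : inf ∈ Ext) (b : V → V → ℝ)
    (hsym : ∀ u w, b u w = b w u) (hdiag : ∀ u, b u u = 0)
    (hdi : ∀ u, u ∉ Ext → ∑ w, b u w = D) (hde : ∀ u ∈ Ext, ∑ w, b u w = 0)
    (x : V → E) (hinj : ∀ u w, u ≠ inf → w ≠ inf → u ≠ w → x u ≠ x w) :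
    fR inf b x = Real.exp (- ∑ u, ∑ w, b u w * Real.log (ch (po inf x u) (po inf x w)))
      * ∏ v ∈ Extᶜ, jb (x v) ^ (-(2 * D)) := by
  rw [fR_exp inf b hdiag x hinj, log_identity inf b
    (fun u w => Real.log (ch (po inf x u) (po inf x w))) (fun u w => Real.log ‖x u - x w‖)
    (fun u => Real.log (jb (x u))) hsym hdiag]
  · have h1 : ∏ v ∈ Extᶜ, jb (x v) ^ (-(2 * D))
        = Real.exp (- (2 * ∑ u ∈ Finset.univ.erase inf, (Real.log (jb (x u)) * ∑ w, b u w))) := by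
      have : ∑ u ∈ Finset.univ.erase inf, (Real.log (jb (x u)) * ∑ w, b u w)
          = ∑ u ∈ Extᶜ, Real.log (jb (x u)) * D := by
        symm
        rw [← Finset.sum_subset (s₁ := Extᶜ) (s₂ := Finset.univ.erase inf)]
        · refine Finset.sum_congr rfl fun u hu => ?_
          rw [hdi u (by simpa using hu)]
        · intro u hu
          simp only [Finset.mem_compl] at hu
          simp only [Finset.mem_erase, Finset.mem_univ, and_true]
          exact fun h => hu (h ▸ hinf)
        · intro u _ hu
          simp only [Finset.mem_compl, not_not] at hu
          rw [hde u hu, mul_zero]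
      rw [this, Finset.mul_sum, ← Finset.sum_neg_distrib, Real.exp_sum]
      refine Finset.prod_congr rfl fun u _ => ?_
      rw [Real.rpow_def_of_pos (jb_pos _)]
      congr 1; ring
    rw [h1, ← Real.exp_add]
    congr 1; ring
  · intro u w hu hw huw
    have hp : 0 < ‖x u - x w‖ := norm_pos_iff.mpr (sub_ne_zero.mpr (hinj u w hu hw huw))
    simp only [po, hu, hw, if_false, ch]
    have h1 := jb_pos (x u)
    have h2 := jb_pos (x w)
    rw [Real.log_div hp.ne' (by positivity), Real.log_mul h1.ne' h2.ne']
    ring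
  · intro u hu
    simp only [po, hu, if_false, if_true, ch]
    rw [Real.log_inv]
  · intro u w
    rw [ch_symm]

lemma exists_small {ι : Type} [Finite ι] (f : ι → ℝ) (hf : ∀ i, 0 < f i) :
    ∃ m : ℝ, 0 < m ∧ m ≤ 1 ∧ ∀ i, m ≤ f i := by
  have h1 : ∀ᶠ m in nhdsWithin (0 : ℝ) (Set.Ioi 0), ∀ i, m ≤ f i := by
    rw [Filter.eventually_all]
    intro i
    exact (Filter.Eventually.filter_mono nhdsWithin_le_nhds
      ((eventually_lt_nhds (hf i)).mono fun _ h => h.le))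
  have h2 : ∀ᶠ m in nhdsWithin (0 : ℝ) (Set.Ioi 0), m ≤ 1 :=
    (Filter.Eventually.filter_mono nhdsWithin_le_nhds
      ((eventually_lt_nhds one_pos).mono fun _ h => h.le))
  obtain ⟨m, hm, hm1, hm2⟩ := (h1.and (h2.and self_mem_nhdsWithin)).exists
  exact ⟨m, hm2, hm1, hm⟩

lemma fR_le (D δ K : ℝ) (hδ : 0 < δ) (hK : 2 ≤ K) (inf : V) (Ext : Finset V) (hinf : inf ∈ Ext)
    (b : V → V → ℝ)
    (hsym : ∀ u w, b u w = b w u) (hdiag : ∀ u, b u u = 0)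
    (hdi : ∀ u, u ∉ Ext → ∑ w, b u w = D) (hde : ∀ u ∈ Ext, ∑ w, b u w = 0)
    (hb : ∀ W : Finset V, W.Nonempty → (W ∩ Ext).card ≤ 1 →
      ∑ x ∈ W, ∑ y ∈ W, b x y ≤ δ * ((W.card : ℝ) - 1))
    (x : V → E)
    (hx0 : ∀ u ∈ Ext, ∀ w ∈ Ext, u ≠ w → 1 ≤ (K - 1) * ch (po inf x u) (po inf x w)) :
    ENNReal.ofReal (fR inf b x) ≤
      ENNReal.ofReal (Real.exp ((∑ x, ∑ y, |b x y|) * Real.log K * (((Extᶜ).card : ℝ) + 1)))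
        * HE Ext (kx D δ inf x) (Extᶜ).card Extᶜ := by
  have hdisj : Disjoint Extᶜ Ext := disjoint_compl_left
  have hρ : ∀ w, ENNReal.ofReal (jb (x w) ^ (-(2 * D))) ≠ 0 := fun w => by
    have := jb_pos (x w)
    rw [Ne, ENNReal.ofReal_eq_zero, not_le]; positivity
  by_cases hinj : ∀ u w, u ≠ w → po inf x u ≠ po inf x w
  · have hinj' : ∀ u w, u ≠ inf → w ≠ inf → u ≠ w → x u ≠ x w := by
      intro u w hu hw huw h
      exact hinj u w huw (by simp [po, hu, hw, h])
    rw [fR_ch D inf Ext hinf b hsym hdiag hdi hde x hinj']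
    obtain ⟨m, hm0, hm1, hm⟩ := exists_small
      (fun p : {p : V × V // p.1 ≠ p.2} => ch (po inf x p.1.1) (po inf x p.1.2))
      (fun p => ch_pos _ _ (hinj _ _ p.2))
    have hU : Extᶜ ∪ Ext = Finset.univ := by rw [Finset.union_comm]; exact Finset.union_compl _
    have := pw b (fun u w => ch (po inf x u) (po inf x w)) δ K hK Ext ⟨inf, hinf⟩ hb
      (fun _ _ => ch_symm _ _) (fun _ _ _ => ch_tri _ _ _)
      (fun u w h => ch_pos _ _ (hinj u w h)) (fun _ _ => ch_le _ _) hx0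
      (kx D δ inf x) (fun w => ENNReal.ofReal (jb (x w) ^ (-(2 * D))))
      (by
        intro u w hwE huw
        have hw : w ≠ inf := fun h => hwE (h ▸ hinf)
        · have hp := ch_pos _ _ (hinj u w huw)
          simp only [kx, kerE]
          have : some (x w) = po inf x w := by simp [po, hw]
          rw [this, ENNReal.ofReal_rpow_of_pos hp, Real.rpow_def_of_pos hp]
          gcongr
          apply le_of_eq; ring)
      (Extᶜ).card Extᶜ id m rfl hdisj (by simp [hU]) (by simp) hm0 hm1
      (fun u _ w _ huw => hm ⟨(u, w), huw⟩)
    refine le_trans (le_of_eq ?_) this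
    rw [ENNReal.ofReal_mul (by positivity), ENNReal.ofReal_prod_of_nonneg
      (fun v _ => by have := jb_pos (x v); positivity)]
    congr 3
    rw [Phi_eq, hU, Finset.card_univ, sub_self, mul_zero]
    have h1 : ∑ u, ∑ w, (if id u = id w then b u w else 0) = 0 := by
      refine Finset.sum_eq_zero fun u _ => Finset.sum_eq_zero fun w _ => ?_
      split_ifs with h
      · simp only [id] at h; rw [h, hdiag]
      · rfl
    rw [h1]
    simp only [id, sub_zero, zero_mul, zero_sub]
    congr 1
    refine Finset.sum_congr rfl fun u _ => Finset.sum_congr rfl fun w _ => ?_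
    split_ifs with h
    · rw [h, hdiag, zero_mul]
    · rfl
  · push Not at hinj
    obtain ⟨u, w, huw, he⟩ := hinj
    have : ∃ u w, u ≠ w ∧ po inf x u = po inf x w ∧ w ∉ Ext := by
      by_cases hw : w ∈ Ext
      · by_cases hu : u ∈ Ext
        · have := hx0 u hu w hw huw
          rw [he, ch_self] at this
          linarith
        · exact ⟨w, u, huw.symm, he.symm, hu⟩
      · exact ⟨u, w, huw, he, hw⟩
    obtain ⟨u, w, huw, he, hw⟩ := this
    have hwi : w ≠ inf := fun h => hw (h ▸ hinf)
    have hkne : ∀ u w, kx D δ inf x u w ≠ 0 := by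
      intro u w
      simp only [kx, kerE]
      refine mul_ne_zero ?_ (hρ w)
      rw [Ne, ENNReal.rpow_eq_zero_iff]
      push Not
      exact ⟨fun _ => by linarith, fun h => absurd h ENNReal.ofReal_ne_top⟩
    have hk : kx D δ inf x u w = ⊤ := by
      simp only [kx, kerE]
      have : some (x w) = po inf x w := by simp [po, hwi]
      rw [this, he, ch_self, ENNReal.ofReal_zero, ENNReal.zero_rpow_of_neg (by linarith),
        ENNReal.top_mul (hρ w)]
    rw [HE_eq_top Ext ⟨inf, hinf⟩ _ hkne _ _ rfl hdisj u w (by simpa using hw)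
      (by simp [Finset.mem_union, em']) huw hk, ENNReal.mul_top]
    · exact le_top
    · rw [Ne, ENNReal.ofReal_eq_zero, not_le]; positivity

variable [FiniteDimensional ℝ E] [MeasurableSpace E] [BorelSpace E]

lemma suff (D : ℝ) (hDdef : (Module.finrank ℝ E : ℝ) = D) (hD0 : 0 < D)
    (inf : V) (Ext : Finset V) (hinf : inf ∈ Ext)
    (b : V → V → ℝ)
    (hsym : ∀ u w, b u w = b w u) (hdiag : ∀ u, b u u = 0)
    (hdi : ∀ u, u ∉ Ext → ∑ w, b u w = D) (hde : ∀ u ∈ Ext, ∑ w, b u w = 0)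
    (hb : ∀ W : Finset V, 2 ≤ W.card → (W ∩ Ext).card ≤ 1 →
      ∑ x ∈ W, ∑ y ∈ W, b x y < D * ((W.card : ℝ) - 1))
    (x0 : V → E)
    (hx0 : ∀ u ∈ Ext, ∀ w ∈ Ext, u ≠ w → u ≠ inf → w ≠ inf → x0 u ≠ x0 w) :
    lmarginal (fun _ => volume) Extᶜ (fun x : V → E => ENNReal.ofReal (fR inf b x)) x0 ≠ ⊤ := by
  -- choose δ
  obtain ⟨δ, hδ, hδD, hbδ⟩ : ∃ δ : ℝ, 0 < δ ∧ δ < D ∧ ∀ W : Finset V, W.Nonempty →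
      (W ∩ Ext).card ≤ 1 → ∑ x ∈ W, ∑ y ∈ W, b x y ≤ δ * ((W.card : ℝ) - 1) := by
    have h1 : ∀ᶠ δ in nhdsWithin D (Set.Iio D), ∀ W : Finset V, W.Nonempty →
      (W ∩ Ext).card ≤ 1 → ∑ x ∈ W, ∑ y ∈ W, b x y ≤ δ * ((W.card : ℝ) - 1) := by
      rw [Filter.eventually_all]
      intro W
      by_cases hW : 2 ≤ W.card
      · by_cases hE : (W ∩ Ext).card ≤ 1
        · have hc : ContinuousAt (fun δ : ℝ => δ * ((W.card : ℝ) - 1)) D := by fun_prop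
          have := (hc.eventually (lt_mem_nhds (hb W hW hE)))
          exact Filter.Eventually.filter_mono nhdsWithin_le_nhds (this.mono fun _ h _ _ => h.le)
        · exact Filter.Eventually.of_forall fun _ _ h => absurd h hE
      · refine Filter.Eventually.of_forall fun δ hne _ => ?_
        have : W.card = 1 := by have := Finset.card_pos.mpr hne; omega
        obtain ⟨v, rfl⟩ := Finset.card_eq_one.mp this
        simp [hdiag]
    have h2 : ∀ᶠ δ in nhdsWithin D (Set.Iio D), 0 < δ :=
      Filter.Eventually.filter_mono nhdsWithin_le_nhds (lt_mem_nhds hD0)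
    obtain ⟨δ, a1, a2, a3⟩ := (h1.and (h2.and self_mem_nhdsWithin)).exists
    exact ⟨δ, a2, a3, a1⟩
  -- choose K
  have hpo : ∀ u ∈ Ext, ∀ w ∈ Ext, u ≠ w → po inf x0 u ≠ po inf x0 w := by
    intro u hu w hw huw
    simp only [po]
    split_ifs with h1 h2 h2
    · exact absurd (h1.trans h2.symm) huw
    · simp
    · simp
    · simpa using hx0 u hu w hw huw h1 h2
  obtain ⟨m, hm0, hm1, hm⟩ := exists_small
      (fun p : {p : V × V // p.1 ∈ Ext ∧ p.2 ∈ Ext ∧ p.1 ≠ p.2} =>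
        ch (po inf x0 p.1.1) (po inf x0 p.1.2))
      (fun p => ch_pos _ _ (hpo _ p.2.1 _ p.2.2.1 p.2.2.2))
  have hm1' : 1 ≤ 1 / m := by rw [le_div_iff₀ hm0]; linarith
  obtain ⟨M, hM, hMx⟩ := HE_int (E := E) D δ inf Ext hinf hDdef hδ hδD (Extᶜ).card Extᶜ rfl
    disjoint_compl_left
  set C := ENNReal.ofReal (Real.exp ((∑ x, ∑ y, |b x y|) * Real.log (1 + 1 / m) *
    (((Extᶜ).card : ℝ) + 1))) with hC
  have : lmarginal (fun _ => volume) Extᶜ (fun x : V → E => ENNReal.ofReal (fR inf b x)) x0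
      ≤ C * M := by
    refine le_trans ?_ (mul_le_mul_right (hMx x0) C)
    unfold lmarginal
    rw [← lintegral_const_mul' _ _ ENNReal.ofReal_ne_top]
    refine lintegral_mono fun y => ?_
    refine fR_le D δ (1 + 1 / m) hδ (by linarith) inf Ext hinf b hsym hdiag hdi hde hbδ _ ?_
    intro u hu w hw huw
    have hz : ∀ v ∈ Ext, po inf (Function.updateFinset x0 Extᶜ y) v = po inf x0 v := by
      intro v hv
      simp [po, Function.updateFinset, hv]
    rw [hz u hu, hz w hw]
    have := hm ⟨(u, w), hu, hw, huw⟩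
    simp only at this
    rw [add_sub_cancel_left, div_mul_eq_mul_div, one_mul, le_div_iff₀ hm0]
    linarith
  exact ne_top_of_le_ne_top (ENNReal.mul_ne_top ENNReal.ofReal_ne_top hM) this
end suff
set_option linter.unusedSectionVars false
section nec
variable {E : Type} [NormedAddCommGroup E] [InnerProductSpace ℝ E]
variable {V : Type} [Fintype V] [DecidableEq V]

lemma fR_ge (inf : V) (b : V → V → ℝ) (hdiag : ∀ u, b u u = 0) (x : V → E)
    (κ : ℝ) (hκ : 1 ≤ κ) (τ : V → V → ℝ) (hτ : ∀ u w, 0 < τ u w)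
    (h : ∀ u w, u ≠ inf → w ≠ inf → u ≠ w →
      τ u w ≤ κ * ‖x u - x w‖ ∧ ‖x u - x w‖ ≤ κ * τ u w) :
    Real.exp (-((∑ u, ∑ w, |b u w|) * Real.log κ)) *
      Real.exp (-∑ u ∈ Finset.univ.erase inf, ∑ w ∈ Finset.univ.erase inf,
        b u w * Real.log (τ u w)) ≤ fR inf b x := by
  have hκ0 : 0 < κ := by linarith
  have hinj : ∀ u w, u ≠ inf → w ≠ inf → u ≠ w → x u ≠ x w := by
    intro u w hu hw huw he
    have := (h u w hu hw huw).1
    rw [he] at this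
    simp at this
    linarith [hτ u w]
  rw [fR_exp inf b hdiag x hinj, ← Real.exp_add, Real.exp_le_exp]
  set g : V → V → ℝ := fun u w => if u ≠ inf ∧ w ≠ inf ∧ u ≠ w then Real.log ‖x u - x w‖ else 0
    with hg
  set f : V → V → ℝ := fun u w => if u ≠ inf ∧ w ≠ inf ∧ u ≠ w then Real.log (τ u w) else 0
    with hf
  have e : ∀ (F : V → V → ℝ), ∑ u ∈ Finset.univ.erase inf, ∑ w ∈ Finset.univ.erase inf,
      b u w * F u w = ∑ u, ∑ w, b u w *
        (if u ≠ inf ∧ w ≠ inf ∧ u ≠ w then F u w else 0) := by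
    intro F
    rw [← Finset.sum_subset (Finset.subset_univ (Finset.univ.erase inf))]
    · refine Finset.sum_congr rfl fun u hu => ?_
      rw [← Finset.sum_subset (Finset.subset_univ (Finset.univ.erase inf))]
      · refine Finset.sum_congr rfl fun w hw => ?_
        by_cases huw : u = w
        · subst huw; simp [hdiag]
        · simp [huw, Finset.ne_of_mem_erase hu, Finset.ne_of_mem_erase hw]
      · intro w _ hw; simp at hw; simp [hw]
    · intro w _ hw; simp at hw; simp [hw]
  rw [e (fun u w => Real.log (τ u w)), e (fun u w => Real.log ‖x u - x w‖)]
  have hb := sum_bound (fun u w => - b u w) g f (Real.log κ) (by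
    intro u w
    rw [abs_sub_comm]
    simp only [hf, hg]
    split_ifs with hc
    · obtain ⟨hu, hw, huw⟩ := hc
      obtain ⟨h1, h2⟩ := h u w hu hw huw
      exact log_diff (hτ u w) (norm_pos_iff.mpr (sub_ne_zero.mpr (hinj u w hu hw huw)))
        hκ0 h1 h2
    · simp only [sub_self, abs_zero]; exact Real.log_nonneg hκ)
  simp only [abs_neg, neg_mul, Finset.sum_neg_distrib] at hb
  simp only [hf, hg] at hb
  linarith

variable [FiniteDimensional ℝ E] [MeasurableSpace E] [BorelSpace E]

lemma fR_meas (inf : V) (b : V → V → ℝ) : Measurable (fun x : V → E => fR inf b x) := by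
  unfold fR
  fun_prop

lemma nec_abs (inf : V) (b : V → V → ℝ) (hdiag : ∀ u, b u u = 0) (x0 : V → E)
    (s S : Finset V) (hSs : S ⊆ s) (t : ℕ → ℝ) (ht : ∀ k, 0 < t k)
    (c : ℕ → V → E) (ρ : ℝ) (hρ : 0 < ρ) (P : V → V → Prop) [∀ u w, Decidable (P u w)]
    (κ : ℝ) (hκ : 1 ≤ κ)
    (hsep : ∀ k, ∀ x : V → E, (∀ v, v ∉ s → x v = x0 v) →
      (∀ v ∈ s, ‖x v - c k v‖ < ρ * (if v ∈ S then t k else 1)) →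
      ∀ u w, u ≠ inf → w ≠ inf → u ≠ w →
        (if P u w then t k else 1) ≤ κ * ‖x u - x w‖ ∧
        ‖x u - x w‖ ≤ κ * (if P u w then t k else 1))
    (hbal : ∀ k, (∑ u ∈ Finset.univ.erase inf, ∑ w ∈ Finset.univ.erase inf,
      if P u w then b u w else 0) * Real.log (t k)
        ≤ (Module.finrank ℝ E * S.card : ℝ) * Real.log (t k))
    (hesc : ∃ v ∈ S, ∀ z : E, ∀ᶠ k in Filter.atTop, ¬ ‖z - c k v‖ < ρ * t k) :
    lmarginal (fun _ => volume) s (fun x : V → E => ENNReal.ofReal (fR inf b x)) x0 = ⊤ := by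
  by_contra htop
  rw [lmarginal] at htop
  set F : (s → E) → ℝ≥0∞ := fun y => ENNReal.ofReal (fR inf b (Function.updateFinset x0 s y))
    with hF
  set d := Module.finrank ℝ E with hd
  set R : ℕ → Set (s → E) := fun k => Set.pi Set.univ
    (fun v : s => Metric.ball (c k v) (ρ * (if (v : V) ∈ S then t k else 1))) with hR
  have hRm : ∀ k, MeasurableSet (R k) := fun k =>
    MeasurableSet.univ_pi fun v => Metric.isOpen_ball.measurableSet
  have hFm : Measurable F := by
    have := fR_meas (E := E) inf b
    exact (this.comp measurable_updateFinset).ennreal_ofReal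
  set A : ℝ := Real.exp (-((∑ u, ∑ w, |b u w|) * Real.log κ)) with hA
  set c0 : ℝ≥0∞ := ENNReal.ofReal (A * (ρ ^ d) ^ s.card) *
    (volume (Metric.ball (0 : E) 1)) ^ s.card with hc0
  have hc0pos : c0 ≠ 0 := by
    rw [hc0]
    refine mul_ne_zero ?_ (pow_ne_zero _ (Metric.measure_ball_pos _ _ one_pos).ne')
    rw [Ne, ENNReal.ofReal_eq_zero, not_le]; positivity
  have hlow : ∀ k, c0 ≤ ∫⁻ y, (R k).indicator F y ∂(Measure.pi fun _ : s => (volume : Measure E)) := by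
    intro k
    rw [lintegral_indicator (hRm k)]
    set β : ℝ := (∑ u ∈ Finset.univ.erase inf, ∑ w ∈ Finset.univ.erase inf,
      if P u w then b u w else 0) * Real.log (t k) with hβ
    have h1 : ∀ y ∈ R k, ENNReal.ofReal (A * Real.exp (-β)) ≤ F y := by
      intro y hy
      refine ENNReal.ofReal_le_ofReal ?_
      have := fR_ge inf b hdiag (Function.updateFinset x0 s y) κ hκ
        (fun u w => if P u w then t k else 1)
        (fun u w => by split_ifs; exacts [ht k, one_pos])
        (hsep k _ (fun v hv => by simp [Function.updateFinset, hv]) (fun v hv => by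
          have := hy ⟨v, hv⟩ (Set.mem_univ _)
          simpa [Function.updateFinset, hv, Metric.mem_ball, dist_eq_norm] using this))
      refine le_trans (le_of_eq ?_) this
      congr 2
      rw [hβ, Finset.sum_mul]
      congr 1
      refine Finset.sum_congr rfl fun u _ => ?_
      rw [Finset.sum_mul]
      refine Finset.sum_congr rfl fun w _ => ?_
      split_ifs <;> simp
    refine le_trans ?_ (setLIntegral_mono' (hRm k) h1)
    rw [setLIntegral_const, hR]
    simp only
    rw [Measure.pi_pi]
    have hball : ∀ v : s, volume (Metric.ball (c k v) (ρ * (if (v : V) ∈ S then t k else 1)))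
        = ENNReal.ofReal ((ρ * (if (v : V) ∈ S then t k else 1)) ^ d)
          * volume (Metric.ball (0 : E) 1) := fun v =>
      Measure.addHaar_ball_of_pos volume _ (by have := ht k; split_ifs <;> positivity)
    simp_rw [hball]
    rw [Finset.prod_mul_distrib, Finset.prod_const, ← ENNReal.ofReal_prod_of_nonneg
      (fun v _ => by have := (ht k).le; split_ifs <;> positivity), ← mul_assoc,
      ← ENNReal.ofReal_mul (by positivity), hc0]
    have hcard : (Finset.univ : Finset s).card = s.card := by simp
    rw [hcard]
    gcongr ENNReal.ofReal ?_ * _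
    have hp : ∏ v : s, (ρ * (if (v : V) ∈ S then t k else 1)) ^ d
        = (ρ ^ d) ^ s.card * (t k ^ d) ^ S.card := by
      simp_rw [mul_pow]
      rw [Finset.prod_mul_distrib, Finset.prod_const, hcard]
      congr 1
      rw [Finset.prod_coe_sort s (fun v => (if v ∈ S then t k else 1) ^ d)]
      simp_rw [ite_pow, one_pow]
      rw [Finset.prod_ite_mem, Finset.inter_eq_right.mpr hSs, Finset.prod_const]
    rw [hp]
    have h2 : 1 ≤ Real.exp (-β) * (t k ^ d) ^ S.card := by
      have : (t k ^ d) ^ S.card = Real.exp ((d * S.card : ℝ) * Real.log (t k)) := by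
        rw [← pow_mul, ← Real.exp_log (pow_pos (ht k) _), Real.log_pow]
        push_cast; rfl
      rw [this, ← Real.exp_add]
      apply Real.one_le_exp
      have := hbal k
      linarith
    calc A * (ρ ^ d) ^ s.card = A * (ρ ^ d) ^ s.card * 1 := by ring
      _ ≤ A * (ρ ^ d) ^ s.card * (Real.exp (-β) * (t k ^ d) ^ S.card) := by gcongr
      _ = _ := by ring
  have hlim := tendsto_lintegral_of_dominated_convergence
    (μ := Measure.pi fun _ : s => (volume : Measure E)) (F := fun k => (R k).indicator F)
    (f := fun _ => 0) F (fun k => hFm.indicator (hRm k))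
    (fun k => Filter.Eventually.of_forall fun y => Set.indicator_le_self _ _ y) htop
    (Filter.Eventually.of_forall fun y => by
      obtain ⟨v, hv, hz⟩ := hesc
      refine tendsto_const_nhds.congr' ?_
      filter_upwards [hz (y ⟨v, hSs hv⟩)] with k hk
      rw [Set.indicator_of_notMem]
      intro hy
      have := hy ⟨v, hSs hv⟩ (Set.mem_univ _)
      simp only [hv, if_true, Metric.mem_ball, dist_eq_norm] at this
      exact hk this)
  rw [lintegral_zero] at hlim
  exact hc0pos (le_antisymm (ge_of_tendsto' hlim hlow) zero_le)


lemma pb (q a c e : E) (t ja jc n : ℝ) (ht : 0 < t) (he : ‖e‖ = 1)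
    (ha : ‖a - q - (t * ja) • e‖ ≤ t / 8) (hc : ‖c - q - (t * jc) • e‖ ≤ t / 8)
    (h1 : 1 ≤ |ja - jc|) (h2 : |ja - jc| ≤ n) :
    t ≤ 2 * ‖a - c‖ ∧ ‖a - c‖ ≤ (n + 1) * t := by
  have hm : ‖(t * ja) • e - (t * jc) • e‖ = t * |ja - jc| := by
    rw [← sub_smul, norm_smul, he, mul_one, ← mul_sub, Real.norm_eq_abs, abs_mul, abs_of_pos ht]
  have e1 : a - c = (a - q - (t * ja) • e) - (c - q - (t * jc) • e)
      + ((t * ja) • e - (t * jc) • e) := by abel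
  have u1 : ‖a - c‖ ≤ t / 8 + t / 8 + t * |ja - jc| := by
    rw [e1, ← hm]
    refine (norm_add_le _ _).trans ?_
    gcongr
    refine (norm_sub_le _ _).trans ?_
    gcongr
  have e2 : (t * ja) • e - (t * jc) • e = (a - c) - ((a - q - (t * ja) • e)
      - (c - q - (t * jc) • e)) := by abel
  have u2 : t * |ja - jc| ≤ ‖a - c‖ + (t / 8 + t / 8) := by
    rw [← hm, e2]
    refine (norm_sub_le _ _).trans ?_
    gcongr
    refine (norm_sub_le _ _).trans ?_
    gcongr
  constructor <;> nlinarith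

lemma pc (a c a' c' : E) (η M : ℝ) (hη0 : 0 < η) (hη : η ≤ 1) (ha : ‖a - a'‖ ≤ η / 8)
    (hc : ‖c - c'‖ ≤ η / 8) (h : η ≤ ‖a' - c'‖) (ha' : ‖a'‖ ≤ M) (hc' : ‖c'‖ ≤ M) :
    η ≤ 2 * ‖a - c‖ ∧ ‖a - c‖ ≤ 2 * M + 1 := by
  have e1 : a - c = (a - a') - (c - c') + (a' - c') := by abel
  have u1 : ‖a - c‖ ≤ η / 8 + η / 8 + (M + M) := by
    rw [e1]
    refine (norm_add_le _ _).trans ?_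
    gcongr
    · refine (norm_sub_le _ _).trans ?_
      gcongr
    · refine (norm_sub_le _ _).trans ?_
      gcongr
  have e2 : a' - c' = (a - c) - ((a - a') - (c - c')) := by abel
  have u2 : ‖a' - c'‖ ≤ ‖a - c‖ + (η / 8 + η / 8) := by
    rw [e2]
    refine (norm_sub_le _ _).trans ?_
    gcongr
    refine (norm_sub_le _ _).trans ?_
    gcongr
  constructor <;> linarith

noncomputable def idx (v : V) : ℝ := ((Fintype.equivFin V v : ℕ) : ℝ) + 1

lemma idx_pos (v : V) : 1 ≤ idx v := by unfold idx; simp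

lemma idx_le (v : V) : idx v ≤ Fintype.card V := by
  unfold idx
  exact_mod_cast (Fintype.equivFin V v).2

lemma idx_sep (u w : V) (h : u ≠ w) : 1 ≤ |idx u - idx w| := by
  have h1 : ((Fintype.equivFin V u : ℕ) : ℤ) - (Fintype.equivFin V w : ℕ) ≠ 0 := by
    intro h2
    apply h
    apply (Fintype.equivFin V).injective
    apply Fin.ext
    omega
  have h2 := Int.one_le_abs h1
  unfold idx
  rw [add_sub_add_right_eq_sub]
  exact_mod_cast h2

lemma base_conf (inf : V) (x0 : V → E) (s : Finset V) (e : E) (he : ‖e‖ = 1)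
    (hx0 : ∀ u w, u ∉ s → w ∉ s → u ≠ inf → w ≠ inf → u ≠ w → x0 u ≠ x0 w) :
    ∃ x1 : V → E, (∀ v, v ∉ s → x1 v = x0 v) ∧ ∃ η : ℝ, 0 < η ∧ η ≤ 1 ∧
      (∀ u w, u ≠ inf → w ≠ inf → u ≠ w → η ≤ ‖x1 u - x1 w‖) ∧
      ∃ M : ℝ, 1 ≤ M ∧ ∀ v, ‖x1 v‖ ≤ M := by
  set B : ℝ := ∑ v, ‖x0 v‖ with hB
  have hBv : ∀ v, ‖x0 v‖ ≤ B := fun v =>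
    Finset.single_le_sum (f := fun v => ‖x0 v‖) (fun _ _ => norm_nonneg _) (Finset.mem_univ v)
  have hB0 : 0 ≤ B := Finset.sum_nonneg fun _ _ => norm_nonneg _
  set x1 : V → E := fun v => if v ∈ s then (B + idx v) • e else x0 v with hx1
  have hns : ∀ v : V, ‖(B + idx v) • e‖ = B + idx v := fun v => by
    rw [norm_smul, he, mul_one, Real.norm_eq_abs, abs_of_nonneg]
    linarith [idx_pos v]
  have hinj : ∀ u w, u ≠ inf → w ≠ inf → u ≠ w → x1 u ≠ x1 w := by
    intro u w hu hw huw heq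
    simp only [hx1] at heq
    split_ifs at heq with h1 h2 h2
    · have := idx_sep u w huw
      have h3 : ‖(B + idx u) • e‖ = ‖(B + idx w) • e‖ := by rw [heq]
      rw [hns, hns] at h3
      have h4 : idx u - idx w = 0 := by linarith
      rw [h4] at this
      norm_num at this
    · have h3 : ‖(B + idx u) • e‖ = ‖x0 w‖ := by rw [heq]
      rw [hns] at h3
      linarith [hBv w, idx_pos u]
    · have h3 : ‖x0 u‖ = ‖(B + idx w) • e‖ := by rw [heq]
      rw [hns] at h3
      linarith [hBv u, idx_pos w]
    · exact hx0 u w h1 h2 hu hw huw heq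
  obtain ⟨η, h0, h1, h2⟩ := exists_small
    (fun p : {p : V × V // p.1 ≠ inf ∧ p.2 ≠ inf ∧ p.1 ≠ p.2} => ‖x1 p.1.1 - x1 p.1.2‖)
    (fun p => norm_pos_iff.mpr (sub_ne_zero.mpr (hinj _ _ p.2.1 p.2.2.1 p.2.2.2)))
  refine ⟨x1, fun v hv => by simp [hx1, hv], η, h0, h1,
    fun u w hu hw huw => h2 ⟨(u, w), hu, hw, huw⟩, 1 + ∑ v, ‖x1 v‖, ?_, ?_⟩
  · have : 0 ≤ ∑ v, ‖x1 v‖ := Finset.sum_nonneg fun _ _ => norm_nonneg _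
    linarith
  · intro v
    have := Finset.single_le_sum (f := fun v => ‖x1 v‖) (fun _ _ => norm_nonneg _)
      (Finset.mem_univ v)
    linarith

lemma nec_A (inf : V) (b : V → V → ℝ) (hdiag : ∀ u, b u u = 0) (x0 : V → E) (e : E)
    (he : ‖e‖ = 1) (s S : Finset V) (hSs : S ⊆ s) (hS : S.Nonempty) (hinf : inf ∉ s)
    (p : V) (hps : p ∉ s) (hpi : p ≠ inf)
    (hx0 : ∀ u w, u ∉ s → w ∉ s → u ≠ inf → w ≠ inf → u ≠ w → x0 u ≠ x0 w)
    (hb : (Module.finrank ℝ E * S.card : ℝ) ≤ ∑ u ∈ insert p S, ∑ w ∈ insert p S, b u w) :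
    lmarginal (fun _ => volume) s (fun x : V → E => ENNReal.ofReal (fR inf b x)) x0 = ⊤ := by
  obtain ⟨x1, hx1, η, hη0, hη1, hsep, M, hM1, hM⟩ := base_conf inf x0 s e he hx0
  set n : ℝ := (Fintype.card V : ℝ) with hn
  have hn0 : 0 ≤ n := by positivity
  set t : ℕ → ℝ := fun k => η / (8 * (n + 1)) * (1 / 2) ^ k with htdef
  have ht : ∀ k, 0 < t k := fun k => by positivity
  have htle : ∀ k, t k * (n + 1) ≤ η / 8 := by
    intro k
    have h1 : ((1 : ℝ) / 2) ^ k ≤ 1 := pow_le_one₀ (by norm_num) (by norm_num)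
    calc t k * (n + 1) = η / 8 * (1 / 2) ^ k := by simp only [htdef]; field_simp
      _ ≤ η / 8 * 1 := by gcongr
      _ = _ := by ring
  have ht1 : ∀ k, t k ≤ 1 := fun k => by nlinarith [htle k, ht k]
  have htlim : Filter.Tendsto t Filter.atTop (nhds 0) := by
    have := (tendsto_pow_atTop_nhds_zero_of_lt_one (r := (1 : ℝ) / 2) (by norm_num)
      (by norm_num)).const_mul (η / (8 * (n + 1)))
    simpa [htdef] using this
  have hpS : p ∉ S := fun h => hps (hSs h)
  refine nec_abs inf b hdiag x0 s S hSs t ht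
    (fun k v => if v ∈ S then x0 p + (t k * idx v) • e else x1 v) (η / 8) (by positivity)
    (fun u w => (u = p ∨ u ∈ S) ∧ (w = p ∨ w ∈ S)) (2 / η + (n + 2) + (2 * M + 1))
    ?_ ?_ ?_ ?_
  · have : 0 < 2 / η := by positivity
    linarith
  · intro k x hxs hxb u w hu hw huw
    set j : V → ℝ := fun v => if v ∈ S then idx v else 0 with hj
    have hκη : 0 < 2 / η := by positivity
    have near : ∀ v, (v = p ∨ v ∈ S) → ‖x v - x0 p - (t k * j v) • e‖ ≤ t k / 8 := by
      rintro v (rfl | hv)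
      · have := (ht k).le
        simp [hj, hpS, hxs v hps]
        positivity
      · have := hxb v (hSs hv)
        simp only [hv, if_true] at this
        simp only [hj, hv, if_true]
        rw [sub_sub]
        refine this.le.trans ?_
        nlinarith [ht k]
    have far : ∀ v, ¬ (v = p ∨ v ∈ S) → ‖x v - x1 v‖ ≤ η / 8 := by
      intro v hv
      push Not at hv
      by_cases hvs : v ∈ s
      · have := hxb v hvs
        simp only [hv.2, if_false, mul_one] at this
        exact this.le
      · rw [hxs v hvs, hx1 v hvs]; simp; positivity
    have nearp : ∀ v, (v = p ∨ v ∈ S) → ‖x v - x1 p‖ ≤ η / 8 := by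
      intro v hv
      have h1 := near v hv
      have hj0 : 0 ≤ j v := by
        simp only [hj]; split_ifs; exacts [by linarith [idx_pos v], le_rfl]
      have hjn : j v ≤ n := by
        simp only [hj]; split_ifs; exacts [idx_le v, hn0]
      rw [hx1 p hps]
      have h2 : ‖(t k * j v) • e‖ = t k * j v := by
        rw [norm_smul, he, mul_one, Real.norm_eq_abs, abs_of_nonneg]
        have := ht k
        positivity
      have h3 : x v - x0 p = (x v - x0 p - (t k * j v) • e) + (t k * j v) • e := by abel
      rw [h3]
      refine (norm_add_le _ _).trans ?_
      rw [h2]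
      nlinarith [htle k, ht k]
    split_ifs with hP
    · have hd : 1 ≤ |j u - j w| ∧ |j u - j w| ≤ n := by
        have iu := idx_pos u
        have iw := idx_pos w
        have ju := idx_le u
        have jw := idx_le w
        have := idx_sep u w huw
        rcases hP with ⟨rfl | hu', rfl | hw'⟩
        · exact absurd rfl huw
        · simp only [hj, hpS, hw', if_true, if_false, zero_sub, abs_neg]
          rw [abs_of_nonneg (by linarith)]; exact ⟨iw, jw⟩
        · simp only [hj, hpS, hu', if_true, if_false, sub_zero]
          rw [abs_of_nonneg (by linarith)]; exact ⟨iu, ju⟩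
        · simp only [hj, hu', hw', if_true]
          refine ⟨this, ?_⟩
          rw [abs_le]; constructor <;> linarith
      obtain ⟨g1, g2⟩ := pb (x0 p) (x u) (x w) e (t k) (j u) (j w) n (ht k) he (near u hP.1)
        (near w hP.2) hd.1 hd.2
      have hnn := norm_nonneg (x u - x w)
      have htk := ht k
      constructor
      · refine g1.trans ?_
        gcongr
        linarith
      · refine g2.trans ?_
        refine mul_le_mul_of_nonneg_right ?_ htk.le
        linarith
    · have key : ∃ u' w', u' ≠ inf ∧ w' ≠ inf ∧ u' ≠ w' ∧ ‖x u - x1 u'‖ ≤ η / 8 ∧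
          ‖x w - x1 w'‖ ≤ η / 8 := by
        by_cases hu' : u = p ∨ u ∈ S
        · have hw' : ¬ (w = p ∨ w ∈ S) := fun h => hP ⟨hu', h⟩
          exact ⟨p, w, hpi, hw, fun h => hw' (Or.inl h.symm), nearp u hu', far w hw'⟩
        · by_cases hw' : w = p ∨ w ∈ S
          · exact ⟨u, p, hu, hpi, fun h => hu' (Or.inl h), far u hu', nearp w hw'⟩
          · exact ⟨u, w, hu, hw, huw, far u hu', far w hw'⟩
      obtain ⟨u', w', h1, h2, h3, h4, h5⟩ := key
      obtain ⟨g1, g2⟩ := pc (x u) (x w) (x1 u') (x1 w') η M hη0 hη1 h4 h5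
        (hsep u' w' h1 h2 h3) (hM _) (hM _)
      have hnn := norm_nonneg (x u - x w)
      constructor
      · calc (1 : ℝ) ≤ (2 / η) * ‖x u - x w‖ := by
              rw [div_mul_eq_mul_div, le_div_iff₀ hη0]; linarith
          _ ≤ _ := by gcongr; linarith
      · linarith
  · intro k
    have hlog : Real.log (t k) ≤ 0 := Real.log_nonpos (ht k).le (ht1 k)
    refine mul_le_mul_of_nonpos_right (hb.trans (le_of_eq ?_)) hlog
    have hsub : insert p S ⊆ Finset.univ.erase inf := by
      intro v hv
      rw [Finset.mem_erase]
      refine ⟨?_, Finset.mem_univ _⟩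
      rintro rfl
      rcases Finset.mem_insert.mp hv with h | h
      · exact hpi h.symm
      · exact hinf (hSs h)
    rw [← Finset.sum_subset hsub]
    · refine Finset.sum_congr rfl fun u hu => ?_
      rw [← Finset.sum_subset hsub]
      · refine Finset.sum_congr rfl fun w hw => ?_
        rw [if_pos ⟨Finset.mem_insert.mp hu, Finset.mem_insert.mp hw⟩]
      · intro w _ hw
        rw [if_neg (fun h => hw (Finset.mem_insert.mpr h.2))]
    · intro u _ hu
      refine Finset.sum_eq_zero fun w _ => ?_
      rw [if_neg (fun h => hu (Finset.mem_insert.mpr h.1))]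
  · obtain ⟨v, hv⟩ := hS
    refine ⟨v, hv, fun z => ?_⟩
    simp only [hv, if_true]
    have iv := idx_pos v
    have jv := idx_le v
    have hnm : ∀ k, ‖(t k * idx v) • e‖ = t k * idx v := fun k => by
      rw [norm_smul, he, mul_one, Real.norm_eq_abs, abs_of_nonneg]
      have := ht k
      positivity
    by_cases hz : z = x0 p
    · refine Filter.Eventually.of_forall fun k h => ?_
      rw [hz, sub_add_cancel_left, norm_neg, hnm] at h
      nlinarith [ht k]
    · have hz' : 0 < ‖z - x0 p‖ := norm_pos_iff.mpr (sub_ne_zero.mpr hz)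
      have h1 : ∀ᶠ k in Filter.atTop, t k * (n + 1) < ‖z - x0 p‖ := by
        have := htlim.mul_const (n + 1)
        rw [zero_mul] at this
        exact this.eventually_lt_const hz'
      filter_upwards [h1] with k hk h
      have h3 : z - x0 p = (z - (x0 p + (t k * idx v) • e)) + (t k * idx v) • e := by abel
      have h4 := norm_add_le (z - (x0 p + (t k * idx v) • e)) ((t k * idx v) • e)
      rw [← h3, hnm] at h4
      nlinarith [ht k]

lemma nec_B (inf : V) (b : V → V → ℝ) (hdiag : ∀ u, b u u = 0) (x0 : V → E) (e : E)
    (he : ‖e‖ = 1) (s S : Finset V) (hSs : S ⊆ s) (hS : S.Nonempty)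
    (hx0 : ∀ u w, u ∉ s → w ∉ s → u ≠ inf → w ≠ inf → u ≠ w → x0 u ≠ x0 w)
    (hb : (∑ u ∈ Finset.univ.erase inf, ∑ w ∈ Finset.univ.erase inf,
      if u ∈ S ∨ w ∈ S then b u w else 0) ≤ (Module.finrank ℝ E * S.card : ℝ)) :
    lmarginal (fun _ => volume) s (fun x : V → E => ENNReal.ofReal (fR inf b x)) x0 = ⊤ := by
  obtain ⟨x1, hx1, η, hη0, hη1, hsep, M, hM1, hM⟩ := base_conf inf x0 s e he hx0
  set n : ℝ := (Fintype.card V : ℝ) with hn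
  have hn0 : 0 ≤ n := by positivity
  set t : ℕ → ℝ := fun k => 8 * (M + 1) * 2 ^ k with htdef
  have ht : ∀ k, 0 < t k := fun k => by positivity
  have htge : ∀ k, M + 1 ≤ t k / 8 := by
    intro k
    have h1 : 1 ≤ (2 : ℝ) ^ k := one_le_pow₀ (by norm_num)
    calc M + 1 = (M + 1) * 1 := by ring
      _ ≤ (M + 1) * 2 ^ k := by gcongr
      _ = _ := by simp only [htdef]; ring
  have ht1 : ∀ k, 1 ≤ t k := fun k => by linarith [htge k]
  have htlim : Filter.Tendsto t Filter.atTop Filter.atTop :=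
    (tendsto_pow_atTop_atTop_of_one_lt (r := (2 : ℝ)) (by norm_num)).const_mul_atTop
      (by positivity)
  have hnm : ∀ (k : ℕ) (v : V), ‖(t k * idx v) • e‖ = t k * idx v := fun k v => by
    rw [norm_smul, he, mul_one, Real.norm_eq_abs, abs_of_nonneg]
    have := ht k
    have := idx_pos v
    positivity
  refine nec_abs inf b hdiag x0 s S hSs t ht
    (fun k v => if v ∈ S then (t k * idx v) • e else x1 v) (η / 8) (by positivity)
    (fun u w => u ∈ S ∨ w ∈ S) (2 / η + (n + 2) + (2 * M + 1))
    ?_ ?_ ?_ ?_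
  · have : 0 < 2 / η := by positivity
    linarith
  · intro k x hxs hxb u w hu hw huw
    set j : V → ℝ := fun v => if v ∈ S then idx v else 0 with hj
    have hκη : 0 < 2 / η := by positivity
    have far : ∀ v, v ∉ S → ‖x v - x1 v‖ ≤ η / 8 := by
      intro v hv
      by_cases hvs : v ∈ s
      · have := hxb v hvs
        simp only [hv, if_false, mul_one] at this
        exact this.le
      · rw [hxs v hvs, hx1 v hvs]; simp; positivity
    have near : ∀ v, ‖x v - 0 - (t k * j v) • e‖ ≤ t k / 8 := by
      intro v
      by_cases hv : v ∈ S
      · have := hxb v (hSs hv)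
        simp only [hv, if_true] at this
        simp only [hj, hv, if_true, sub_zero]
        refine this.le.trans ?_
        nlinarith [ht k]
      · have h1 := far v hv
        have h2 : ‖x v‖ ≤ ‖x v - x1 v‖ + ‖x1 v‖ := by
          simpa using norm_add_le (x v - x1 v) (x1 v)
        simp only [hj, hv, if_false, mul_zero, zero_smul, sub_zero]
        linarith [hM v, htge k]
    split_ifs with hP
    · have hd : 1 ≤ |j u - j w| ∧ |j u - j w| ≤ n := by
        have iu := idx_pos u
        have iw := idx_pos w
        have ju := idx_le u
        have jw := idx_le w
        have := idx_sep u w huw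
        by_cases hu' : u ∈ S
        · by_cases hw' : w ∈ S
          · simp only [hj, hu', hw', if_true]
            refine ⟨this, ?_⟩
            rw [abs_le]; constructor <;> linarith
          · simp only [hj, hu', hw', if_true, if_false, sub_zero]
            rw [abs_of_nonneg (by linarith)]; exact ⟨iu, ju⟩
        · have hw' : w ∈ S := hP.resolve_left hu'
          simp only [hj, hu', hw', if_true, if_false, zero_sub, abs_neg]
          rw [abs_of_nonneg (by linarith)]; exact ⟨iw, jw⟩
      obtain ⟨g1, g2⟩ := pb 0 (x u) (x w) e (t k) (j u) (j w) n (ht k) he (near u)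
        (near w) hd.1 hd.2
      have hnn := norm_nonneg (x u - x w)
      have htk := ht k
      constructor
      · refine g1.trans ?_
        gcongr
        linarith
      · refine g2.trans ?_
        refine mul_le_mul_of_nonneg_right ?_ htk.le
        linarith
    · push Not at hP
      obtain ⟨g1, g2⟩ := pc (x u) (x w) (x1 u) (x1 w) η M hη0 hη1 (far u hP.1) (far w hP.2)
        (hsep u w hu hw huw) (hM _) (hM _)
      have hnn := norm_nonneg (x u - x w)
      constructor
      · calc (1 : ℝ) ≤ (2 / η) * ‖x u - x w‖ := by
              rw [div_mul_eq_mul_div, le_div_iff₀ hη0]; linarith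
          _ ≤ _ := by gcongr; linarith
      · linarith
  · intro k
    exact mul_le_mul_of_nonneg_right hb (Real.log_nonneg (ht1 k))
  · obtain ⟨v, hv⟩ := hS
    refine ⟨v, hv, fun z => ?_⟩
    simp only [hv, if_true]
    have iv := idx_pos v
    filter_upwards [htlim.eventually_gt_atTop (2 * ‖z‖)] with k hk h
    have h4 := norm_sub_le z (z - (t k * idx v) • e)
    rw [sub_sub_cancel, hnm] at h4
    nlinarith [ht k]


lemma nec (D : ℝ) (hDdef : (Module.finrank ℝ E : ℝ) = D) (hD0 : 0 < D)
    (inf : V) (Ext : Finset V) (hinf : inf ∈ Ext)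
    (b : V → V → ℝ) (hsym : ∀ u w, b u w = b w u) (hdiag : ∀ u, b u u = 0)
    (hdi : ∀ u, u ∉ Ext → ∑ w, b u w = D) (x0 : V → E)
    (hx0 : ∀ u ∈ Ext, ∀ w ∈ Ext, u ≠ w → u ≠ inf → w ≠ inf → x0 u ≠ x0 w)
    (hfin : lmarginal (fun _ => volume) Extᶜ
      (fun x : V → E => ENNReal.ofReal (fR inf b x)) x0 ≠ ⊤)
    (W : Finset V) (hW2 : 2 ≤ W.card) (hW1 : (W ∩ Ext).card ≤ 1) :
    ∑ x ∈ W, ∑ y ∈ W, b x y < D * ((W.card : ℝ) - 1) := by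
  by_contra hcon
  rw [not_lt] at hcon
  apply hfin
  have hnt : Nontrivial E := by
    apply Module.nontrivial_of_finrank_pos (R := ℝ)
    have : (0 : ℝ) < Module.finrank ℝ E := hDdef ▸ hD0
    exact_mod_cast this
  obtain ⟨e, he⟩ := exists_norm_eq E (zero_le_one' ℝ)
  have hx0' : ∀ u w, u ∉ Extᶜ → w ∉ Extᶜ → u ≠ inf → w ≠ inf → u ≠ w → x0 u ≠ x0 w := by
    intro u w hu hw hui hwi huw
    rw [Finset.mem_compl, not_not] at hu hw
    exact hx0 u hu w hw huw hui hwi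
  have hinf' : inf ∉ Extᶜ := by simp [hinf]
  have hcardS : ∀ p ∈ W, ((W.erase p).card : ℝ) = (W.card : ℝ) - 1 := by
    intro p hp
    rw [Finset.card_erase_of_mem hp, Nat.cast_sub (by omega)]; simp
  have hneS : ∀ p ∈ W, (W.erase p).Nonempty := by
    intro p hp
    rw [← Finset.card_pos, Finset.card_erase_of_mem hp]; omega
  rcases Nat.lt_or_ge (W ∩ Ext).card 1 with h0 | h1
  · have hemp : W ∩ Ext = ∅ := by rw [← Finset.card_eq_zero]; omega
    have hWE : ∀ v ∈ W, v ∉ Ext := fun v hv hvE => by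
      have : v ∈ W ∩ Ext := Finset.mem_inter.mpr ⟨hv, hvE⟩
      rw [hemp] at this
      simp at this
    obtain ⟨p, hp⟩ : W.Nonempty := by rw [← Finset.card_pos]; omega
    have hpE := hWE p hp
    have hpi : p ≠ inf := fun h => hpE (h ▸ hinf)
    have hm : Measurable (fun x : V → E => ENNReal.ofReal (fR inf b x)) :=
      (fR_meas inf b).ennreal_ofReal
    rw [lmarginal_erase _ hm (Finset.mem_compl.mpr hpE)]
    have hae : ∀ᵐ z : E ∂volume, lmarginal (fun _ => volume) (Extᶜ.erase p)
        (fun x : V → E => ENNReal.ofReal (fR inf b x)) (Function.update x0 p z) = ⊤ := by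
      have hnull : ∀ᵐ z : E ∂volume, z ∉ (Set.range x0) :=
        measure_eq_zero_iff_ae_notMem.mp ((Set.finite_range x0).measure_zero _)
      filter_upwards [hnull] with z hz
      have hz' : ∀ v, x0 v ≠ z := fun v h => hz ⟨v, h⟩
      refine nec_A inf b hdiag _ e he (Extᶜ.erase p) (W.erase p) ?_ (hneS p hp) ?_ p (by simp)
        hpi ?_ ?_
      · intro v hv
        rw [Finset.mem_erase] at hv ⊢
        exact ⟨hv.1, Finset.mem_compl.mpr (hWE v hv.2)⟩
      · simp [hinf]
      · intro u w hu hw hui hwi huw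
        rw [Finset.mem_erase, Finset.mem_compl] at hu hw
        by_cases hup : u = p
        · subst hup
          have : w ≠ u := huw.symm
          simp only [Function.update_self, Function.update_of_ne this]
          exact (hz' w).symm
        · by_cases hwp : w = p
          · subst hwp
            simp only [Function.update_self, Function.update_of_ne hup]
            exact hz' u
          · simp only [Function.update_of_ne hup, Function.update_of_ne hwp]
            refine hx0 u ?_ w ?_ huw hui hwi
            · by_contra h; exact hu ⟨hup, h⟩
            · by_contra h; exact hw ⟨hwp, h⟩
      · rw [Finset.insert_erase hp, hDdef, hcardS p hp]; exact hcon
    rw [lintegral_congr_ae hae, lintegral_const, ENNReal.top_mul]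
    exact (isOpen_univ.measure_pos volume Set.univ_nonempty).ne'
  · obtain ⟨p, hp⟩ := Finset.card_eq_one.mp (le_antisymm hW1 h1)
    have hpm : p ∈ W ∩ Ext := by rw [hp]; simp
    obtain ⟨hpW, hpE⟩ := Finset.mem_inter.mp hpm
    have hSE : ∀ v ∈ W.erase p, v ∉ Ext := by
      intro v hv hvE
      rw [Finset.mem_erase] at hv
      have : v ∈ W ∩ Ext := Finset.mem_inter.mpr ⟨hv.2, hvE⟩
      rw [hp, Finset.mem_singleton] at this
      exact hv.1 this
    have hSs : W.erase p ⊆ Extᶜ := fun v hv => Finset.mem_compl.mpr (hSE v hv)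
    by_cases hpi : p = inf
    · subst hpi
      refine nec_B p b hdiag x0 e he Extᶜ (W.erase p) hSs (hneS p hpW) hx0' ?_
      rw [hDdef, hcardS p hpW]
      set S := W.erase p with hS
      have hpS : p ∉ S := by simp [hS]
      have hsub : S ⊆ Finset.univ.erase p := Finset.erase_subset_erase _ (Finset.subset_univ _)
      have e1 : ∑ u ∈ Finset.univ.erase p, ∑ w ∈ Finset.univ.erase p,
          (if u ∈ S ∨ w ∈ S then b u w else 0)
          = ∑ u ∈ S, ∑ w ∈ Finset.univ.erase p, b u w
            + ∑ w ∈ S, ∑ u ∈ Finset.univ.erase p, b u w - ∑ u ∈ S, ∑ w ∈ S, b u w := by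
        have k1 : ∑ u ∈ S, ∑ w ∈ Finset.univ.erase p, b u w
            = ∑ u ∈ Finset.univ.erase p, ∑ w ∈ Finset.univ.erase p,
              (if u ∈ S then b u w else 0) := by
          rw [← Finset.sum_subset hsub]
          · refine Finset.sum_congr rfl fun u hu => ?_
            simp [hu]
          · intro u _ hu; simp [hu]
        have k2 : ∑ w ∈ S, ∑ u ∈ Finset.univ.erase p, b u w
            = ∑ u ∈ Finset.univ.erase p, ∑ w ∈ Finset.univ.erase p,
              (if w ∈ S then b u w else 0) := by
          rw [Finset.sum_comm]
          refine Finset.sum_congr rfl fun u hu => ?_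
          rw [← Finset.sum_subset hsub]
          · refine Finset.sum_congr rfl fun w hw => ?_
            simp [hw]
          · intro w _ hw; simp [hw]
        have k3 : ∑ u ∈ S, ∑ w ∈ S, b u w
            = ∑ u ∈ Finset.univ.erase p, ∑ w ∈ Finset.univ.erase p,
              (if u ∈ S ∧ w ∈ S then b u w else 0) := by
          rw [← Finset.sum_subset hsub]
          · refine Finset.sum_congr rfl fun u hu => ?_
            rw [← Finset.sum_subset hsub]
            · refine Finset.sum_congr rfl fun w hw => ?_
              simp [hu, hw]
            · intro w _ hw; simp [hw]
          · intro u _ hu; simp [hu]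
        rw [k1, k2, k3, ← Finset.sum_add_distrib, ← Finset.sum_sub_distrib]
        refine Finset.sum_congr rfl fun u _ => ?_
        rw [← Finset.sum_add_distrib, ← Finset.sum_sub_distrib]
        refine Finset.sum_congr rfl fun w _ => ?_
        by_cases hu : u ∈ S <;> by_cases hw : w ∈ S <;> simp [hu, hw]
      have e2 : ∑ u ∈ S, ∑ w ∈ Finset.univ.erase p, b u w
          = D * S.card - ∑ u ∈ S, b u p := by
        have : ∀ u ∈ S, ∑ w ∈ Finset.univ.erase p, b u w = D - b u p := by
          intro u hu
          rw [← hdi u (hSE u hu), ← Finset.sum_erase_add _ _ (Finset.mem_univ p)]; ring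
        rw [Finset.sum_congr rfl this, Finset.sum_sub_distrib, Finset.sum_const, nsmul_eq_mul,
          mul_comm]
      have e3 : ∑ w ∈ S, ∑ u ∈ Finset.univ.erase p, b u w
          = ∑ u ∈ S, ∑ w ∈ Finset.univ.erase p, b u w :=
        Finset.sum_congr rfl fun u _ => Finset.sum_congr rfl fun w _ => hsym _ _
      have e4 : ∑ x ∈ W, ∑ y ∈ W, b x y
          = ∑ u ∈ S, ∑ w ∈ S, b u w + 2 * ∑ u ∈ S, b u p := by
        have hWS : W = insert p S := (Finset.insert_erase hpW).symm
        rw [hWS, Finset.sum_insert hpS, Finset.sum_insert hpS, hdiag]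
        simp_rw [Finset.sum_insert hpS]
        rw [Finset.sum_add_distrib]
        simp_rw [hsym p]
        ring
      have e5 := hcardS p hpW
      rw [← hS] at e5
      rw [e5] at e2
      rw [e1, e3, e2]
      linarith
    · refine nec_A inf b hdiag x0 e he Extᶜ (W.erase p) hSs (hneS p hpW) hinf' p (by simp [hpE])
        hpi hx0' ?_
      rw [Finset.insert_erase hpW, hDdef, hcardS p hpW]; exact hcon
end nec

section fin
variable {E : Type} [NormedAddCommGroup E] [InnerProductSpace ℝ E]
variable {V : Type} [Fintype V] [DecidableEq V]

lemma prod_eq (inf : V) (lam : ℝ) (ν : V → V → ℝ) (hsym : ∀ u w, ν u w = ν w u)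
    (hdiag : ∀ u, ν u u = 0) (x : V → E)
    (hg : ∀ u w, ‖x u - x w‖ ^ (-(lam * (ν u w + ν w u)))
      = ‖x w - x u‖ ^ (-(lam * (ν w u + ν u w)))) :
    ∏ ed ∈ Finset.univ.filter (fun ed : Sym2 V => ¬ ed.IsDiag ∧ inf ∉ ed),
        Sym2.lift ⟨fun u w => ‖x u - x w‖ ^ (-(lam * (ν u w + ν w u))), hg⟩ ed
      = fR inf (fun u w => lam * ν u w) x := by
  unfold fR
  rw [← Finset.prod_product']
  have h1 : ∏ p ∈ (Finset.univ.erase inf) ×ˢ (Finset.univ.erase inf),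
        ‖x p.1 - x p.2‖ ^ (-(lam * ν p.1 p.2))
      = ∏ p ∈ ((Finset.univ.erase inf) ×ˢ (Finset.univ.erase inf)).filter
          (fun p : V × V => p.1 ≠ p.2), ‖x p.1 - x p.2‖ ^ (-(lam * ν p.1 p.2)) := by
    symm
    refine Finset.prod_subset (Finset.filter_subset _ _) ?_
    rintro ⟨u, w⟩ h1 h2
    have : u = w := by
      by_contra h
      exact h2 (Finset.mem_filter.mpr ⟨h1, h⟩)
    subst this
    simp [hdiag]
  rw [h1]
  rw [← Finset.prod_fiberwise_of_maps_to (t := Finset.univ.filter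
    (fun ed : Sym2 V => ¬ ed.IsDiag ∧ inf ∉ ed)) (g := fun p : V × V => s(p.1, p.2))]
  · refine Finset.prod_congr rfl fun ed hed => ?_
    induction ed using Sym2.ind with
    | _ u w =>
      simp only [Finset.mem_filter, Finset.mem_univ, true_and, Sym2.mk_isDiag_iff,
        Sym2.mem_iff, not_or] at hed
      obtain ⟨huw, hu, hw⟩ := hed
      have hfib : Finset.filter (fun p : V × V => s(p.1, p.2) = s(u, w))
          (((Finset.univ.erase inf) ×ˢ (Finset.univ.erase inf)).filter
            (fun p : V × V => p.1 ≠ p.2)) = {(u, w), (w, u)} := by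
        ext ⟨a, c⟩
        simp only [Finset.mem_filter, Finset.mem_product, Finset.mem_erase, Finset.mem_univ,
          and_true, Sym2.eq_iff, Finset.mem_insert, Finset.mem_singleton, Prod.mk.injEq]
        constructor
        · exact fun h => h.2
        · rintro (⟨rfl, rfl⟩ | ⟨rfl, rfl⟩)
          · exact ⟨⟨⟨Ne.symm hu, Ne.symm hw⟩, huw⟩, Or.inl ⟨rfl, rfl⟩⟩
          · exact ⟨⟨⟨Ne.symm hw, Ne.symm hu⟩, Ne.symm huw⟩, Or.inr ⟨rfl, rfl⟩⟩
      rw [hfib, Finset.prod_pair (by simp [huw]), Sym2.lift_mk]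
      simp only
      rw [norm_sub_rev (x w) (x u), hsym w u, ← sq, ← Real.rpow_mul_natCast (norm_nonneg _)]
      congr 1
      push_cast; ring
  · rintro ⟨u, w⟩ h
    simp only [Finset.mem_filter, Finset.mem_product, Finset.mem_erase, Finset.mem_univ,
      and_true] at h
    simp only [Finset.mem_filter, Finset.mem_univ, true_and, Sym2.mk_isDiag_iff,
        Sym2.mem_iff, not_or]
    exact ⟨h.2, Ne.symm h.1.1, Ne.symm h.1.2⟩

variable [FiniteDimensional ℝ E] [MeasurableSpace E] [BorelSpace E]

lemma lint_eq (Ext : Finset V) (x0 : V → E) (F : (V → E) → ℝ≥0∞) :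
    ∫⁻ Y : {u : V // u ∉ Ext} → E, F (fun v => if h : v ∉ Ext then Y ⟨v, h⟩ else x0 v)
      = lmarginal (fun _ => volume) Extᶜ F x0 := by
  set σ : {u : V // u ∉ Ext} ≃ ↥(Extᶜ) := Equiv.subtypeEquivRight (fun u => by simp) with hσ
  have hmp := volume_measurePreserving_piCongrLeft (fun _ : ↥(Extᶜ) => E) σ
  rw [lmarginal, ← volume_pi, ← hmp.lintegral_comp_emb (MeasurableEquiv.measurableEmbedding _)]
  refine lintegral_congr fun Y => ?_
  congr 1
  funext v
  by_cases h : v ∈ Ext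
  · simp [Function.updateFinset, h]
  · have hv : v ∈ Extᶜ := Finset.mem_compl.mpr h
    simp only [Function.updateFinset, h, not_false_eq_true, dif_pos, hv]
    have : (⟨v, hv⟩ : ↥(Extᶜ)) = σ ⟨v, h⟩ := rfl
    rw [this, MeasurableEquiv.coe_piCongrLeft, Equiv.piCongrLeft_apply_apply]
end fin

end CGF

/-- Convergence criterion for completed graphical functions: the integral over
the internal vertices converges iff every subgraph with at least two vertices
and at most one external vertex satisfies the weight inequality
`N_{Ḡ[V]} < (|V ∩ V_ext| − 1)·(λ+1)/λ`. -/
theorem completed_graphical_function_convergence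
    (D : ℕ) (hD : 4 ≤ D) (hDeven : Even D)
    (V : Type) [Fintype V] [DecidableEq V]
    (v0 v1 vz vinf : V)
    (h01 : v0 ≠ v1) (h0z : v0 ≠ vz) (h0i : v0 ≠ vinf)
    (h1z : v1 ≠ vz) (h1i : v1 ≠ vinf) (hzi : vz ≠ vinf)
    (ν : V → V → ℝ) (hsym : ∀ u w, ν u w = ν w u) (hdiag : ∀ u, ν u u = 0)
    (hdegint : ∀ u : V, u ∉ ({v0, v1, vz, vinf} : Finset V) →
      ∑ w : V, ν u w = (D : ℝ) / ((D : ℝ) / 2 - 1))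
    (hdegext : ∀ u ∈ ({v0, v1, vz, vinf} : Finset V), ∑ w : V, ν u w = 0)
    (e y : EuclideanSpace ℝ (Fin D)) (he : ‖e‖ = 1)
    (hy0 : y ≠ 0) (hye : y ≠ e) (hncol : ∀ t : ℝ, y ≠ t • e) :
    let lam : ℝ := (D : ℝ) / 2 - 1
    let extV : Finset V := {v0, v1, vz, vinf}
    let pos : ({u : V // u ∉ ({v0, v1, vz, vinf} : Finset V)} →
        EuclideanSpace ℝ (Fin D)) → V → EuclideanSpace ℝ (Fin D) :=
      fun Y u =>
        if u = v0 then 0 else if u = v1 then e else if u = vz then y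
        else if h : u ∉ ({v0, v1, vz, vinf} : Finset V) then Y ⟨u, h⟩ else 0
    let N : Finset V → ℝ := fun W =>
      (∑ u ∈ W, ∑ w ∈ W, ν u w) / 2 - ((lam + 1) / lam) * ((W \ extV).card : ℝ)
    (Integrable (fun Y : {u : V // u ∉ ({v0, v1, vz, vinf} : Finset V)} →
        EuclideanSpace ℝ (Fin D) =>
      ∏ ed ∈ Finset.univ.filter (fun ed : Sym2 V => ¬ ed.IsDiag ∧ vinf ∉ ed),
        Sym2.lift ⟨fun u w => ‖pos Y u - pos Y w‖ ^ (-(lam * (ν u w + ν w u))),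
          fun u w => by dsimp only; rw [norm_sub_rev, add_comm (ν u w)]⟩ ed))
    ↔ ∀ W : Finset V, 2 ≤ W.card → (W ∩ extV).card ≤ 1 →
        N W < (((W ∩ extV).card : ℝ) - 1) * ((lam + 1) / lam) := by
  intro lam extV pos N
  have hD' : (4 : ℝ) ≤ D := by exact_mod_cast hD
  have hlam : 0 < lam := by simp only [lam]; linarith
  have hD0 : (0 : ℝ) < D := by linarith
  set b : V → V → ℝ := fun u w => lam * ν u w with hb
  set x0 : V → EuclideanSpace ℝ (Fin D) := pos 0 with hx0
  have hDdef : (Module.finrank ℝ (EuclideanSpace ℝ (Fin D)) : ℝ) = D := by simp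
  have hinf : vinf ∈ extV := by simp [extV]
  have hbsym : ∀ u w, b u w = b w u := fun u w => by simp only [hb]; rw [hsym]
  have hbdiag : ∀ u, b u u = 0 := fun u => by simp [hb, hdiag]
  have hbdi : ∀ u, u ∉ extV → ∑ w, b u w = D := by
    intro u hu
    simp only [hb]
    rw [← Finset.mul_sum, hdegint u hu]
    exact mul_div_cancel₀ _ hlam.ne'
  have hbde : ∀ u ∈ extV, ∑ w, b u w = 0 := by
    intro u hu
    simp only [hb]
    rw [← Finset.mul_sum, hdegext u hu, mul_zero]
  have he0 : e ≠ 0 := by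
    intro h
    rw [h, norm_zero] at he
    exact zero_ne_one he
  have p0 : x0 v0 = 0 := by simp [hx0, pos]
  have p1 : x0 v1 = e := by simp [hx0, pos, h01.symm]
  have pz : x0 vz = y := by simp [hx0, pos, h0z.symm, h1z.symm]
  have hx0d : ∀ u ∈ extV, ∀ w ∈ extV, u ≠ w → u ≠ vinf → w ≠ vinf → x0 u ≠ x0 w := by
    intro u hu w hw huw hui hwi
    simp only [extV, Finset.mem_insert, Finset.mem_singleton] at hu hw
    have k1 := he0.symm
    have k2 := hy0.symm
    have k3 := hye.symm
    rcases hu with h | h | h | h <;> rcases hw with h' | h' | h' | h' <;>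
      first
        | exact absurd (h.trans h'.symm) huw
        | exact absurd h hui
        | exact absurd h' hwi
        | (rw [h, h']; simp only [p0, p1, pz]; assumption)
  have hpos : ∀ Y, pos Y = fun v => if h : v ∉ extV then Y ⟨v, h⟩ else x0 v := by
    intro Y
    funext v
    by_cases h : v ∈ extV
    · have h' := h
      simp only [extV, Finset.mem_insert, Finset.mem_singleton] at h'
      simp only [h, not_true_eq_false, dif_neg, not_false_eq_true]
      rcases h' with rfl | rfl | rfl | rfl
      · rw [p0]; simp [pos]
      · rw [p1]; simp [pos, h01.symm]
      · rw [pz]; simp [pos, h0z.symm, h1z.symm]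
      · simp [pos, hx0]
    · have h' := h
      simp only [extV, Finset.mem_insert, Finset.mem_singleton, not_or] at h'
      simp only [h, not_false_eq_true, dif_pos, pos]
      rw [if_neg h'.1, if_neg h'.2.1, if_neg h'.2.2.1, dif_pos]
  have hposm : Measurable pos := by
    rw [measurable_pi_iff]
    intro v
    by_cases h : v ∈ extV
    · have : (fun Y => pos Y v) = fun _ => x0 v := by
        funext Y; rw [hpos]; simp [h]
      rw [this]; exact measurable_const
    · have : (fun Y => pos Y v) = fun Y => Y ⟨v, h⟩ := by
        funext Y; rw [hpos]; simp [h]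
      rw [this]; exact measurable_pi_apply _
  have hfun : (fun Y : {u : V // u ∉ ({v0, v1, vz, vinf} : Finset V)} →
        EuclideanSpace ℝ (Fin D) =>
      ∏ ed ∈ Finset.univ.filter (fun ed : Sym2 V => ¬ ed.IsDiag ∧ vinf ∉ ed),
        Sym2.lift ⟨fun u w => ‖pos Y u - pos Y w‖ ^ (-(lam * (ν u w + ν w u))),
          fun u w => by dsimp only; rw [norm_sub_rev, add_comm (ν u w)]⟩ ed)
      = fun Y => CGF.fR vinf b (pos Y) := by
    funext Y
    exact CGF.prod_eq vinf lam ν hsym hdiag (pos Y) _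
  have hIntg : (Integrable (fun Y : {u : V // u ∉ ({v0, v1, vz, vinf} : Finset V)} →
        EuclideanSpace ℝ (Fin D) => CGF.fR vinf b (pos Y))) ↔
      lmarginal (fun _ => volume) extVᶜ
        (fun x : V → EuclideanSpace ℝ (Fin D) => ENNReal.ofReal (CGF.fR vinf b x)) x0 ≠ ⊤ := by
    have hm : Measurable (fun Y : {u : V // u ∉ ({v0, v1, vz, vinf} : Finset V)} →
        EuclideanSpace ℝ (Fin D) => CGF.fR vinf b (pos Y)) :=
      (CGF.fR_meas vinf b).comp hposm
    have hnn : ∀ x : V → EuclideanSpace ℝ (Fin D), 0 ≤ CGF.fR vinf b x := fun x =>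
      Finset.prod_nonneg fun u _ => Finset.prod_nonneg fun w _ =>
        Real.rpow_nonneg (norm_nonneg _) _
    rw [Integrable, and_iff_right hm.aestronglyMeasurable,
      hasFiniteIntegral_iff_ofReal (Filter.Eventually.of_forall fun Y => hnn _),
      ← CGF.lint_eq, lt_top_iff_ne_top]
    simp_rw [hpos]
    rfl
  rw [hfun, hIntg]
  have hiff : ∀ W : Finset V, (N W < (((W ∩ extV).card : ℝ) - 1) * ((lam + 1) / lam)) ↔
      ∑ u ∈ W, ∑ w ∈ W, b u w < D * ((W.card : ℝ) - 1) := by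
    intro W
    have hc : (W.card : ℝ) = ((W \ extV).card : ℝ) + ((W ∩ extV).card : ℝ) := by
      exact_mod_cast (Finset.card_sdiff_add_card_inter W extV).symm
    have hbs : ∑ u ∈ W, ∑ w ∈ W, b u w = lam * ∑ u ∈ W, ∑ w ∈ W, ν u w := by
      simp only [hb, Finset.mul_sum]
    have hDl : (D : ℝ) = 2 * (lam + 1) := by simp only [lam]; ring
    rw [hbs, hc, hDl]
    simp only [N]
    set X := ∑ u ∈ W, ∑ w ∈ W, ν u w with hX
    set A := ((W \ extV).card : ℝ) with hA
    set B := ((W ∩ extV).card : ℝ) with hB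
    have k1 : X / 2 - (lam + 1) / lam * A - (B - 1) * ((lam + 1) / lam)
        = (lam * X - 2 * (lam + 1) * (A + B - 1)) / (2 * lam) := by
      field_simp
      ring
    rw [← sub_neg, k1, div_neg_iff, ← sub_neg (a := lam * X)]
    constructor
    · rintro (h | h)
      · linarith [h.2]
      · exact h.1
    · intro h
      exact Or.inr ⟨h, by linarith⟩
  simp_rw [hiff]
  constructor
  · intro hfin W h2 h1
    exact CGF.nec D hDdef hD0 vinf extV hinf b hbsym hbdiag hbdi x0 hx0d hfin W h2 h1
  · intro h
    exact CGF.suff D hDdef hD0 vinf extV hinf b hbsym hbdiag hbdi hbde h x0 hx0d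
end

section
/- Let λ > 0 and D = 2λ + 2. Let G be a finite weighted graph with internal vertex set V_int and three external vertices labelled 0, 1, z, with real edge weights ν (symmetric, no self-loops, nonzero on only finitely many pairs). Then there exist unique real numbers σ_v for v ∈ V_int ∪ {0, 1, z} and a unique real number τ with the following property: the completed graph Ḡ, obtained from G by adjoining a new vertex ∞, adding for each v ∈ V_int ∪ {0, 1, z} an edge v–∞ of weight σ_v, and adding τ to the weight of the edge 0–1 (all other weights unchanged), satisfies that every internal vertex of Ḡ has weighted degree D/λ and each of the external vertices 0, 1, z, ∞ has weighted degree 0. Moreover, if λ = 1 and all edge weights of G are integers, then all σ_v and τ are integers; and if λ = 2 and all edge weights of G lie in (1/2)ℤ, then all σ_v and τ lie in (1/2)ℤ. -/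
theorem even_sum_aux {α : Type} [Fintype α] [DecidableEq α] (n : α → α → ℤ)
    (hs : ∀ u w, n u w = n w u) (hd : ∀ u, n u u = 0) :
    ∃ e : ℤ, ∑ u, ∑ w, n u w = 2 * e := by
  have h : ((∑ u, ∑ w, n u w : ℤ) : ZMod 2) = 0 := by
    push_cast
    rw [← Finset.sum_product']
    refine Finset.sum_involution (fun p _ => (p.2, p.1)) ?_ ?_ ?_ ?_
    · rintro ⟨u, w⟩ _
      simp only [hs w u]
      exact CharTwo.add_self_eq_zero _
    · rintro ⟨u, w⟩ _ h heq
      simp only [Prod.mk.injEq] at heq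
      apply h
      simp [heq.1, hd]
    · intro a ha
      simp
    · intro a ha
      rfl
  rw [ZMod.intCast_zmod_eq_zero_iff_dvd] at h
  obtain ⟨e, he⟩ := h
  exact ⟨e, by simpa using he⟩

/-- The integrality part, on the lattice `c ℤ`. -/
theorem lattice_aux (K c : ℝ) (a : ℤ) (hK : K = c * (2 * a))
    (ι : Type) [Fintype ι] [DecidableEq ι]
    (ν : (ι ⊕ Fin 3) → (ι ⊕ Fin 3) → ℝ)
    (hc : c ≠ 0)
    (hsym : ∀ u w, ν u w = ν w u) (hdiag : ∀ u, ν u u = 0)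
    (hν : ∀ u w, ∃ n : ℤ, ν u w = c * n) (σ : (ι ⊕ Fin 3) → ℝ) (τ : ℝ)
    (h1 : ∀ i : ι, (∑ w : ι ⊕ Fin 3, ν (Sum.inl i) w) + σ (Sum.inl i) = K)
    (h2 : (∑ w : ι ⊕ Fin 3, ν (Sum.inr 0) w) + τ + σ (Sum.inr 0) = 0)
    (h3 : (∑ w : ι ⊕ Fin 3, ν (Sum.inr 1) w) + τ + σ (Sum.inr 1) = 0)
    (h4 : (∑ w : ι ⊕ Fin 3, ν (Sum.inr 2) w) + σ (Sum.inr 2) = 0)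
    (h5 : ∑ v : ι ⊕ Fin 3, σ v = 0) :
    (∀ v, ∃ n : ℤ, σ v = c * n) ∧ (∃ n : ℤ, τ = c * n) := by
  choose n hn using hν
  obtain ⟨e, he⟩ := even_sum_aux n
    (fun u w => by
      have := hsym u w
      rw [hn, hn] at this
      exact_mod_cast mul_left_cancel₀ hc this)
    (fun u => by
      have := hdiag u
      rw [hn] at this
      have := (mul_eq_zero.1 this).resolve_left hc
      exact_mod_cast this)
  have hdeg : ∀ u, ∑ w, ν u w = c * ((∑ w, n u w : ℤ) : ℝ) := by
    intro u
    push_cast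
    rw [Finset.mul_sum]
    exact Finset.sum_congr rfl fun w _ => hn u w
  have he' : ∑ u, ((∑ w, n u w : ℤ) : ℝ) = 2 * e := by exact_mod_cast he
  simp only [hdeg] at h1 h2 h3 h4
  generalize hd : (fun u => ∑ w, n u w) = d at *
  have hd' : ∀ u, ∑ w, n u w = d u := fun u => congrFun hd u
  simp only [hd'] at h1 h2 h3 h4 he'
  have hτ : τ = c * ((a * Fintype.card ι - e : ℤ) : ℝ) := by
    rw [Fintype.sum_sum_type, Fin.sum_univ_three] at h5 he'
    have h6 : ∑ i : ι, σ (Sum.inl i) = Fintype.card ι * K - c * ∑ i : ι, (d (Sum.inl i) : ℝ) := by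
      rw [Finset.sum_congr rfl fun i _ => eq_sub_of_add_eq' (h1 i)]
      rw [Finset.sum_sub_distrib, Finset.mul_sum]
      simp
    push_cast
    rw [h6, hK] at h5
    linear_combination (1/2) * (h2 + h3 + h4 - h5) - c / 2 * he'
  refine ⟨?_, _, hτ⟩
  rintro (i | j)
  · exact ⟨2 * a - d (Sum.inl i), by push_cast; linear_combination h1 i + hK⟩
  · fin_cases j
    · exact ⟨- d (Sum.inr 0) - (a * Fintype.card ι - e), by
        push_cast at hτ ⊢; linear_combination h2 - hτ⟩
    · exact ⟨- d (Sum.inr 1) - (a * Fintype.card ι - e), by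
        push_cast at hτ ⊢; linear_combination h3 - hτ⟩
    · exact ⟨- d (Sum.inr 2), by
        push_cast; linear_combination h4⟩

/-- Completion of a weighted graph with three external vertices `0, 1, z`
(here `Sum.inr 0, Sum.inr 1, Sum.inr 2`) is always possible and unique: there
are unique weights `σ_v` for the new edges `v–∞` and a unique shift `τ` of the
weight of the edge `0–1` such that in the completed graph every internal
vertex has weighted degree `D/λ` and every external vertex (including `∞`) has
weighted degree `0`.  Moreover integer weights stay integer for `λ = 1` and
half-integer weights stay half-integer for `λ = 2`. -/
theorem completion_exists_unique
    (lam : ℝ) (hlam : 0 < lam) (D : ℝ) (hD : D = 2 * lam + 2)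
    (ι : Type) [Fintype ι] [DecidableEq ι]
    (ν : (ι ⊕ Fin 3) → (ι ⊕ Fin 3) → ℝ)
    (hsym : ∀ u w, ν u w = ν w u) (hdiag : ∀ u, ν u u = 0) :
    let Cond : ((ι ⊕ Fin 3) → ℝ) → ℝ → Prop := fun σ τ =>
      (∀ i : ι, (∑ w : ι ⊕ Fin 3, ν (Sum.inl i) w) + σ (Sum.inl i) = D / lam) ∧
      ((∑ w : ι ⊕ Fin 3, ν (Sum.inr 0) w) + τ + σ (Sum.inr 0) = 0) ∧
      ((∑ w : ι ⊕ Fin 3, ν (Sum.inr 1) w) + τ + σ (Sum.inr 1) = 0) ∧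
      ((∑ w : ι ⊕ Fin 3, ν (Sum.inr 2) w) + σ (Sum.inr 2) = 0) ∧
      (∑ v : ι ⊕ Fin 3, σ v = 0)
    (∃! p : ((ι ⊕ Fin 3) → ℝ) × ℝ, Cond p.1 p.2) ∧
    (lam = 1 → (∀ u w, ∃ n : ℤ, ν u w = n) →
      ∀ σ τ, Cond σ τ → (∀ v, ∃ n : ℤ, σ v = n) ∧ (∃ n : ℤ, τ = n)) ∧
    (lam = 2 → (∀ u w, ∃ n : ℤ, ν u w = n / 2) →
      ∀ σ τ, Cond σ τ → (∀ v, ∃ n : ℤ, σ v = n / 2) ∧ (∃ n : ℤ, τ = n / 2)) := by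
  intro Cond
  refine ⟨?_, ?_, ?_⟩
  · let K : ℝ := D / lam
    let d : ι ⊕ Fin 3 → ℝ := fun u => ∑ w, ν u w
    let t : ℝ := (Fintype.card ι * K - ∑ u, d u) / 2
    refine ⟨(Sum.elim (fun i => K - d (Sum.inl i))
      ![-d (Sum.inr 0) - t, -d (Sum.inr 1) - t, -d (Sum.inr 2)], t), ?_, ?_⟩
    · refine ⟨fun i => ?_, ?_, ?_, ?_, ?_⟩
      · simp [d, K]
      · simp [d]
      · simp [d]
      · simp [d]
      · have ht : t = (Fintype.card ι * K - ∑ u, d u) / 2 := rfl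
        rw [Fintype.sum_sum_type, Fin.sum_univ_three] at ht
        rw [Fintype.sum_sum_type, Fin.sum_univ_three]
        simp only [Sum.elim_inl, Sum.elim_inr, Finset.sum_sub_distrib, Finset.sum_const,
          Finset.card_univ, nsmul_eq_mul, Matrix.cons_val]
        linear_combination (-2) * ht
    · rintro ⟨σ, τ⟩ ⟨h1, h2, h3, h4, h5⟩
      simp only at h1 h2 h3 h4 h5
      change ∀ i, d (Sum.inl i) + σ (Sum.inl i) = K at h1
      change d (Sum.inr 0) + τ + _ = 0 at h2
      change d (Sum.inr 1) + τ + _ = 0 at h3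
      change d (Sum.inr 2) + _ = 0 at h4
      have hτ : τ = t := by
        have ht : t = (Fintype.card ι * K - ∑ u, d u) / 2 := rfl
        rw [Fintype.sum_sum_type, Fin.sum_univ_three] at ht h5
        have h6 : ∑ i : ι, σ (Sum.inl i) = Fintype.card ι * K - ∑ i : ι, d (Sum.inl i) := by
          rw [Finset.sum_congr rfl fun i _ => eq_sub_of_add_eq' (h1 i)]
          rw [Finset.sum_sub_distrib]
          simp
        rw [h6] at h5
        linear_combination (1/2) * (h2 + h3 + h4 - h5) - ht
      refine Prod.ext (funext ?_) hτ
      rintro (i | j)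
      · simp only [Sum.elim_inl]
        linear_combination h1 i
      · fin_cases j
        · simp
          linear_combination h2 - hτ
        · simp
          linear_combination h3 - hτ
        · simp
          linear_combination h4
  · rintro rfl hν σ τ ⟨h1, h2, h3, h4, h5⟩
    have := lattice_aux (D / 1) 1 2 (by rw [hD]; norm_num) ι ν one_ne_zero hsym hdiag
      (by simpa using hν) σ τ h1 h2 h3 h4 h5
    simpa using this
  · rintro rfl hν σ τ ⟨h1, h2, h3, h4, h5⟩
    have hh : ∀ n : ℤ, (n : ℝ) / 2 = 1 / 2 * n := fun n => by ring
    simp only [hh] at hν ⊢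
    exact lattice_aux (D / 2) (1 / 2) 3 (by rw [hD]; norm_num) ι ν (by norm_num) hsym hdiag
      hν σ τ h1 h2 h3 h4 h5
end

section
/- Let D ≥ 1 be an integer and s a real number with 0 < s < D. Then for every Schwartz function φ : ℝ^D → ℂ, the functions x ↦ ‖x‖^{−s}·(𝓕φ)(x) and ξ ↦ ‖ξ‖^{s−D}·φ(ξ) are Lebesgue integrable on ℝ^D, and ∫_{ℝ^D} ‖x‖^{−s}·(𝓕φ)(x) dx = 2^{D−s}·π^{D/2}·(Γ((D−s)/2)/Γ(s/2))·∫_{ℝ^D} ‖ξ‖^{s−D}·φ(ξ) dξ, where (𝓕φ)(x) = ∫_{ℝ^D} e^{−i⟨x,ξ⟩} φ(ξ) dξ. Equivalently, the Fourier transform of the tempered distribution ‖x‖^{−s} is 2^{D−s}π^{D/2}(Γ((D−s)/2)/Γ(s/2))·‖ξ‖^{s−D}. -/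
open MeasureTheory RealInnerProductSpace

lemma riesz_integrable {D : ℕ} (hD : 1 ≤ D) {s : ℝ} (hs0 : 0 < s) (hsD : s < D)
    (φ : SchwartzMap (EuclideanSpace ℝ (Fin D)) ℂ) :
    Integrable (fun x : EuclideanSpace ℝ (Fin D) => ((‖x‖ ^ (-s) : ℝ) : ℂ) * φ x) := by
  have hmeas : AEStronglyMeasurable
      (fun x : EuclideanSpace ℝ (Fin D) => ((‖x‖ ^ (-s) : ℝ) : ℂ) * φ x) volume := by
    apply AEStronglyMeasurable.mul _ φ.continuous.aestronglyMeasurable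
    apply Measurable.aestronglyMeasurable
    fun_prop
  have hC : ∃ C, ∀ x, ‖φ x‖ ≤ C := by
    obtain ⟨C, hC⟩ := φ.decay 0 0
    exact ⟨C, fun x => by simpa using hC.2 x⟩
  obtain ⟨C, hC⟩ := hC
  rw [← integrableOn_univ, ← Set.union_compl_self (Metric.ball (0 : EuclideanSpace ℝ (Fin D)) 1)]
  apply IntegrableOn.union
  · apply integrableOn_ball_of_norm_le_rpow (C := C) (α := s) (by simpa using hD)
      (by simpa using hsD) _ hmeas
    refine Filter.Eventually.of_forall fun x => ?_
    have h : 0 ≤ ‖x‖ ^ (-s) := by positivity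
    rw [norm_mul, Complex.norm_real, Real.norm_of_nonneg h, mul_comm]
    exact mul_le_mul_of_nonneg_right (hC x) h
  · apply Integrable.mono' φ.integrable.norm.integrableOn hmeas.restrict
    rw [ae_restrict_iff' (Metric.isOpen_ball.measurableSet.compl)]
    refine Filter.Eventually.of_forall fun x hx => ?_
    have hx1 : 1 ≤ ‖x‖ := by simpa using hx
    have h : 0 ≤ ‖x‖ ^ (-s) := by positivity
    rw [norm_mul, Complex.norm_real, Real.norm_of_nonneg h]
    apply mul_le_of_le_one_left (norm_nonneg _)
    exact Real.rpow_le_one_of_one_le_of_nonpos hx1 (by linarith)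

lemma riesz_mellin {D : ℕ} (hD : 1 ≤ D) {s : ℝ} (hs0 : 0 < s) (hsD : s < D)
    (φ : SchwartzMap (EuclideanSpace ℝ (Fin D)) ℂ) :
    mellin (fun t : ℝ => ∫ x, ((Real.exp (-(‖x‖ ^ 2 * t)) : ℝ) : ℂ) * φ x) ((s / 2 : ℝ) : ℂ)
      = (Real.Gamma (s / 2) : ℂ) * ∫ x, ((‖x‖ ^ (-s) : ℝ) : ℂ) * φ x := by
  have : Nonempty (Fin D) := ⟨⟨0, hD⟩⟩
  have hsp : 0 < s / 2 := by positivity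
  have hg : ∀ x : EuclideanSpace ℝ (Fin D), x ≠ 0 →
      ∫ t in Set.Ioi (0:ℝ), t ^ (s / 2 - 1) * Real.exp (-(‖x‖ ^ 2 * t))
        = ‖x‖ ^ (-s) * Real.Gamma (s / 2) := by
    intro x hx
    have hx' : 0 < ‖x‖ := norm_pos_iff.2 hx
    rw [Real.integral_rpow_mul_exp_neg_mul_Ioi hsp (by positivity)]
    congr 1
    rw [one_div, Real.inv_rpow (by positivity), ← Real.rpow_natCast, ← Real.rpow_mul hx'.le,
      ← Real.rpow_neg hx'.le]
    congr 1
    push_cast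
    ring
  have hne : ∀ᵐ x : EuclideanSpace ℝ (Fin D), x ≠ 0 := by
    exact Measure.ae_ne volume 0
  have hint : Integrable (Function.uncurry fun (t : ℝ) (x : EuclideanSpace ℝ (Fin D)) =>
      ((t ^ (s / 2 - 1) * Real.exp (-(‖x‖ ^ 2 * t)) : ℝ) : ℂ) * φ x)
      ((volume.restrict (Set.Ioi (0:ℝ))).prod volume) := by
    rw [integrable_prod_iff']
    · constructor
      · filter_upwards [hne] with x hx
        have hx' : 0 < ‖x‖ := norm_pos_iff.2 hx
        have := integrableOn_rpow_mul_exp_neg_mul_rpow (p := 1) (s := s / 2 - 1) (b := ‖x‖ ^ 2)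
          (by linarith) one_pos (by positivity)
        have h3 : Integrable (fun t : ℝ => t ^ (s / 2 - 1) * Real.exp (-(‖x‖ ^ 2 * t)))
            (volume.restrict (Set.Ioi (0:ℝ))) := by
          simpa [IntegrableOn] using this
        exact (h3.ofReal (𝕜 := ℂ)).mul_const (φ x)
      · apply ((riesz_integrable hD hs0 hsD φ).norm.const_mul (Real.Gamma (s / 2))).congr
        filter_upwards [hne] with x hx
        have hx' : 0 < ‖x‖ := norm_pos_iff.2 hx
        have h1 : ∫ t in Set.Ioi (0:ℝ), ‖((t ^ (s / 2 - 1) * Real.exp (-(‖x‖ ^ 2 * t)) : ℝ) : ℂ) * φ x‖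
          = ∫ t in Set.Ioi (0:ℝ), (t ^ (s / 2 - 1) * Real.exp (-(‖x‖ ^ 2 * t))) * ‖φ x‖ := by
          apply setIntegral_congr_fun measurableSet_Ioi
          intro t ht
          have ht' : (0:ℝ) < t := ht
          have h : 0 ≤ t ^ (s / 2 - 1) * Real.exp (-(‖x‖ ^ 2 * t)) := by positivity
          simp only [norm_mul (_ : ℂ) (φ x), Complex.norm_real, Real.norm_of_nonneg h]
        have h : 0 ≤ ‖x‖ ^ (-s) := by positivity
        simp only [Function.uncurry]
        rw [h1, integral_mul_const, hg x hx, norm_mul, Complex.norm_real, Real.norm_of_nonneg h]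
        ring
    · apply AEStronglyMeasurable.mul
      · apply Measurable.aestronglyMeasurable
        fun_prop
      · exact (φ.continuous.comp continuous_snd).aestronglyMeasurable
  calc _ = ∫ t in Set.Ioi (0:ℝ), ∫ x : EuclideanSpace ℝ (Fin D),
        ((t ^ (s / 2 - 1) * Real.exp (-(‖x‖ ^ 2 * t)) : ℝ) : ℂ) * φ x := by
        apply setIntegral_congr_fun measurableSet_Ioi
        intro t ht
        have ht' : (0:ℝ) < t := ht
        simp only [smul_eq_mul]
        rw [← integral_const_mul]
        congr 1
        ext x
        rw [← Complex.ofReal_one, ← Complex.ofReal_sub, ← Complex.ofReal_cpow ht'.le]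
        push_cast
        ring
    _ = _ := by
        rw [integral_integral_swap hint, ← integral_const_mul]
        apply integral_congr_ae
        filter_upwards [hne] with x hx
        rw [integral_mul_const, integral_complex_ofReal, hg x hx]
        push_cast
        ring

lemma riesz_gauss {D : ℕ} (φ : SchwartzMap (EuclideanSpace ℝ (Fin D)) ℂ) {t : ℝ} (ht : 0 < t) :
    ∫ x : EuclideanSpace ℝ (Fin D), ((Real.exp (-(‖x‖ ^ 2 * t)) : ℝ) : ℂ) *
      (∫ ξ : EuclideanSpace ℝ (Fin D),
        Complex.exp (-Complex.I * ((⟪x, ξ⟫ : ℝ) : ℂ)) * φ ξ)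
    = (((Real.pi / t) ^ ((D : ℝ) / 2) : ℝ) : ℂ) *
      ∫ ξ, ((Real.exp (-(‖ξ‖ ^ 2 * (4 * t)⁻¹)) : ℝ) : ℂ) * φ ξ := by
  have htc : 0 < ((t : ℂ)).re := by simpa using ht
  have hG : Integrable (fun x : EuclideanSpace ℝ (Fin D) =>
      ((Real.exp (-(‖x‖ ^ 2 * t)) : ℝ) : ℂ)) := by
    have := GaussianFourier.integrable_cexp_neg_mul_sq_norm_add htc 0
      (0 : EuclideanSpace ℝ (Fin D))
    refine this.congr (Filter.Eventually.of_forall fun x => ?_)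
    push_cast
    congr 1
    ring
  have hint : Integrable (Function.uncurry fun (x ξ : EuclideanSpace ℝ (Fin D)) =>
      ((Real.exp (-(‖x‖ ^ 2 * t)) : ℝ) : ℂ) *
        (Complex.exp (-Complex.I * ((⟪x, ξ⟫ : ℝ) : ℂ)) * φ ξ)) (volume.prod volume) := by
    refine (hG.mul_prod φ.integrable).mono ?_ (Filter.Eventually.of_forall fun p => ?_)
    · apply Continuous.aestronglyMeasurable
      have := φ.continuous
      unfold Function.uncurry
      fun_prop
    · simp [Function.uncurry, Complex.norm_exp]
  simp_rw [← integral_const_mul]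
  rw [integral_integral_swap hint]
  congr 1
  ext ξ
  have h := GaussianFourier.integral_cexp_neg_mul_sq_norm_add htc (-Complex.I) ξ
  have h2 : ∀ x : EuclideanSpace ℝ (Fin D), ((Real.exp (-(‖x‖ ^ 2 * t)) : ℝ) : ℂ) *
        (Complex.exp (-Complex.I * ((⟪x, ξ⟫ : ℝ) : ℂ)) * φ ξ)
      = Complex.exp (-(t:ℂ) * ‖x‖ ^ 2 + -Complex.I * ((⟪ξ, x⟫ : ℝ) : ℂ)) * φ ξ := by
    intro x
    rw [real_inner_comm, Complex.exp_add]
    push_cast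
    rw [← mul_assoc]
    congr 4
    ring
  simp_rw [h2]
  rw [integral_mul_const, h, ← mul_assoc]
  congr 2
  · rw [Complex.ofReal_cpow (by positivity)]
    simp
  · push_cast
    congr 1
    simp
    ring

/-- The Fourier transform of the tempered distribution `‖x‖^{−s}` is
`2^{D−s} π^{D/2} (Γ((D−s)/2)/Γ(s/2)) ‖ξ‖^{s−D}`, tested against a Schwartz
function `φ` with `(𝓕φ)(x) = ∫ e^{−i⟨x,ξ⟩} φ(ξ) dξ`. -/
theorem fourier_transform_of_riesz_potential
    (D : ℕ) (hD : 1 ≤ D) (s : ℝ) (hs0 : 0 < s) (hsD : s < D)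
    (φ : SchwartzMap (EuclideanSpace ℝ (Fin D)) ℂ) :
    let Fφ : EuclideanSpace ℝ (Fin D) → ℂ := fun x =>
      ∫ ξ : EuclideanSpace ℝ (Fin D),
        Complex.exp (-Complex.I * ((⟪x, ξ⟫ : ℝ) : ℂ)) * φ ξ
    Integrable (fun x : EuclideanSpace ℝ (Fin D) => ((‖x‖ ^ (-s) : ℝ) : ℂ) * Fφ x) ∧
    Integrable (fun ξ : EuclideanSpace ℝ (Fin D) =>
      ((‖ξ‖ ^ (s - (D : ℝ)) : ℝ) : ℂ) * φ ξ) ∧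
    (∫ x : EuclideanSpace ℝ (Fin D), ((‖x‖ ^ (-s) : ℝ) : ℂ) * Fφ x)
      = (((2 : ℝ) ^ ((D : ℝ) - s) * Real.pi ^ ((D : ℝ) / 2) *
            (Real.Gamma (((D : ℝ) - s) / 2) / Real.Gamma (s / 2)) : ℝ) : ℂ) *
          ∫ ξ : EuclideanSpace ℝ (Fin D), ((‖ξ‖ ^ (s - (D : ℝ)) : ℝ) : ℂ) * φ ξ := by
  intro Fφ
  have hc : (2 * Real.pi)⁻¹ ≠ 0 := by positivity
  let e : EuclideanSpace ℝ (Fin D) ≃L[ℝ] EuclideanSpace ℝ (Fin D) :=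
    ContinuousLinearEquiv.smulLeft (Units.mk0 (2 * Real.pi)⁻¹ hc)
  let ψ : SchwartzMap (EuclideanSpace ℝ (Fin D)) ℂ :=
    SchwartzMap.compCLMOfContinuousLinearEquiv ℂ e (FourierTransform.fourier φ)
  have hψ : ∀ x, Fφ x = ψ x := by
    intro x
    have h1 : ψ x = (FourierTransform.fourier (φ : EuclideanSpace ℝ (Fin D) → ℂ))
        ((2 * Real.pi)⁻¹ • x) := rfl
    rw [h1, Real.fourier_eq']
    simp only [Fφ]
    congr 1
    ext ξ
    rw [smul_eq_mul, inner_smul_right, real_inner_comm]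
    congr 2
    have : (Real.pi : ℂ) ≠ 0 := by exact_mod_cast Real.pi_ne_zero
    push_cast
    field_simp
  have hs' : 0 < (D : ℝ) - s := by linarith
  have hneg : s - (D : ℝ) = -((D : ℝ) - s) := by ring
  have hM1 := riesz_mellin hD hs0 hsD ψ
  have hM2 := riesz_mellin hD hs' (by linarith) φ
  have hGH : mellin (fun t : ℝ => ∫ x, ((Real.exp (-(‖x‖ ^ 2 * t)) : ℝ) : ℂ) * ψ x)
        ((s / 2 : ℝ) : ℂ)
      = (((2 : ℝ) ^ ((D : ℝ) - s) * Real.pi ^ ((D : ℝ) / 2) : ℝ) : ℂ) *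
        mellin (fun t : ℝ => ∫ x, ((Real.exp (-(‖x‖ ^ 2 * t)) : ℝ) : ℂ) * φ x)
          ((((D : ℝ) - s) / 2 : ℝ) : ℂ) := by
    set H : ℝ → ℂ := fun t : ℝ => ∫ x, ((Real.exp (-(‖x‖ ^ 2 * t)) : ℝ) : ℂ) * φ x with hH
    have step1 : mellin (fun t : ℝ => ∫ x, ((Real.exp (-(‖x‖ ^ 2 * t)) : ℝ) : ℂ) * ψ x)
        ((s / 2 : ℝ) : ℂ) = mellin (fun t : ℝ => ((Real.pi ^ ((D : ℝ) / 2) : ℝ) : ℂ) •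
          ((t : ℂ) ^ ((-((D : ℝ) / 2) : ℝ) : ℂ) • (fun u => H u⁻¹) (4 * t))) ((s / 2 : ℝ) : ℂ) := by
      apply setIntegral_congr_fun measurableSet_Ioi
      intro t ht
      have ht' : (0:ℝ) < t := ht
      have := riesz_gauss φ ht'
      simp only [← hψ]
      simp only [Fφ]
      rw [this, ← Complex.ofReal_cpow ht'.le]
      simp only [smul_eq_mul, hH]
      rw [Real.div_rpow Real.pi_pos.le ht'.le, Real.rpow_neg ht'.le]
      push_cast
      ring
    rw [step1, mellin_const_smul, mellin_cpow_smul, mellin_comp_mul_left (fun u => H u⁻¹) _ four_pos,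
      mellin_comp_inv]
    have e1 : -(((s / 2 : ℝ) : ℂ) + ((-((D : ℝ) / 2) : ℝ) : ℂ)) = ((((D : ℝ) - s) / 2 : ℝ) : ℂ) := by
      push_cast
      ring
    rw [e1, ← Complex.ofReal_cpow (by norm_num)]
    have e2 : (4:ℝ) ^ (((D : ℝ) - s) / 2) = 2 ^ ((D : ℝ) - s) := by
      rw [show (4:ℝ) = 2 ^ (2:ℝ) by norm_num, ← Real.rpow_mul (by norm_num)]
      congr 1
      ring
    rw [e2]
    simp only [smul_eq_mul]
    push_cast
    ring
  have hFeq : Fφ = ψ := funext hψ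
  rw [hFeq, hneg]
  refine ⟨riesz_integrable hD hs0 hsD ψ, riesz_integrable hD hs' (by linarith) φ, ?_⟩
  rw [hM1, hM2] at hGH
  have hΓ : (Real.Gamma (s / 2) : ℂ) ≠ 0 := by
    exact_mod_cast (Real.Gamma_pos_of_pos (by positivity)).ne'
  apply mul_left_cancel₀ hΓ
  rw [hGH]
  push_cast
  field_simp
end
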